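/- arXiv:2407.12586 — 6 statements merged into one kernel-verified Lean document; each statement's English description precedes it below -/
import Mathlib

section
/- For all positive integers a and b, gcd(2^a + 1, 2^b + 1) = 1 if and only if the 2-adic valuations of a and b are different (i.e., the largest power of 2 dividing a is not equal to the largest power of 2 dividing b). -/
/-!
Write `a = 2 ^ s * u` and `b = 2 ^ t * v` with `u` and `v` odd. Since `y + 1 ∣ y ^ u + 1` for odd
`u`, the number `x ^ 2 ^ s + 1` divides `x ^ a + 1`, so equal valuations give a nontrivial common
divisor. If `s < t`, then `2 * a ∣ b * u`; modulo a common divisor of `x ^ a + 1` and `x ^ b + 1`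
the power `x ^ (b * u)` is therefore both `1` and `-1`, so the divisor divides `2`, and it is odd
when `x` is even.
-/

theorem exists_odd_eq_two_pow_padicValNat_mul {a : ℕ} (ha : a ≠ 0) :
    ∃ u, Odd u ∧ a = 2 ^ padicValNat 2 a * u := by
  obtain ⟨s, u, hu, rfl⟩ := Nat.exists_eq_two_pow_mul_odd ha
  refine ⟨u, hu, ?_⟩
  rw [padicValNat_base_pow_mul one_lt_two hu.pos.ne',
    padicValNat.eq_zero_of_not_dvd hu.not_two_dvd_nat, zero_add]

section CommRing

variable {R : Type*} [CommRing R]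

theorem pow_add_one_dvd_pow_mul_add_one (x : R) (m : ℕ) {u : ℕ} (hu : Odd u) :
    x ^ m + 1 ∣ x ^ (m * u) + 1 := by
  simpa only [pow_mul, one_pow] using hu.add_dvd_pow_add_pow (x ^ m) 1

theorem pow_add_one_dvd_pow_sub_one (x : R) {m n : ℕ} (h : 2 * m ∣ n) :
    x ^ m + 1 ∣ x ^ n - 1 :=
  calc
    x ^ m + 1 ∣ x ^ (2 * m) - 1 := ⟨x ^ m - 1, by ring⟩
    _ ∣ x ^ n - 1 := dvd_pow_sub_one_of_dvd h

theorem pow_two_pow_padicValNat_add_one_dvd (x : R) {a : ℕ} (ha : a ≠ 0) :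
    x ^ 2 ^ padicValNat 2 a + 1 ∣ x ^ a + 1 := by
  obtain ⟨u, hu, ha_eq⟩ := exists_odd_eq_two_pow_padicValNat_mul ha
  conv_rhs => rw [ha_eq]
  exact pow_add_one_dvd_pow_mul_add_one x _ hu

theorem dvd_two_of_dvd_pow_add_one_of_padicValNat_lt {d x : R} {a b : ℕ}
    (hab : padicValNat 2 a < padicValNat 2 b) (hda : d ∣ x ^ a + 1) (hdb : d ∣ x ^ b + 1) :
    d ∣ 2 := by
  rcases eq_or_ne a 0 with rfl | ha
  · simpa only [pow_zero, one_add_one_eq_two] using hda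
  obtain ⟨u, hu, ha_eq⟩ := exists_odd_eq_two_pow_padicValNat_mul ha
  have two_mul_dvd : 2 * a ∣ b * u :=
    calc
      2 * a = 2 ^ (padicValNat 2 a + 1) * u := by rw [pow_succ', mul_assoc, ← ha_eq]
      _ ∣ b * u := mul_dvd_mul_right ((pow_dvd_pow 2 hab).trans pow_padicValNat_dvd) u
  have dvd_add_one : d ∣ x ^ (b * u) + 1 := hdb.trans (pow_add_one_dvd_pow_mul_add_one x b hu)
  have dvd_sub_one : d ∣ x ^ (b * u) - 1 := hda.trans (pow_add_one_dvd_pow_sub_one x two_mul_dvd)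
  simpa only [add_sub_sub_cancel, one_add_one_eq_two] using dvd_sub dvd_add_one dvd_sub_one

theorem dvd_two_of_dvd_pow_add_one_of_padicValNat_ne {d x : R} {a b : ℕ}
    (hab : padicValNat 2 a ≠ padicValNat 2 b) (hda : d ∣ x ^ a + 1) (hdb : d ∣ x ^ b + 1) :
    d ∣ 2 := by
  rcases hab.lt_or_gt with hlt | hgt
  · exact dvd_two_of_dvd_pow_add_one_of_padicValNat_lt hlt hda hdb
  · exact dvd_two_of_dvd_pow_add_one_of_padicValNat_lt hgt hdb hda

end CommRing

theorem gcd_pow_add_one_dvd_two {x a b : ℕ} (hab : padicValNat 2 a ≠ padicValNat 2 b) :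
    Nat.gcd (x ^ a + 1) (x ^ b + 1) ∣ 2 := by
  zify
  apply dvd_two_of_dvd_pow_add_one_of_padicValNat_ne (x := (x : ℤ)) hab
  · exact_mod_cast Nat.gcd_dvd_left (x ^ a + 1) (x ^ b + 1)
  · exact_mod_cast Nat.gcd_dvd_right (x ^ a + 1) (x ^ b + 1)

theorem pow_two_pow_padicValNat_add_one_dvd_gcd (x : ℕ) {a b : ℕ} (ha : a ≠ 0) (hb : b ≠ 0)
    (hab : padicValNat 2 a = padicValNat 2 b) :
    x ^ 2 ^ padicValNat 2 a + 1 ∣ Nat.gcd (x ^ a + 1) (x ^ b + 1) := by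
  apply Nat.dvd_gcd
  · exact_mod_cast pow_two_pow_padicValNat_add_one_dvd (x : ℤ) ha
  · rw [hab]
    exact_mod_cast pow_two_pow_padicValNat_add_one_dvd (x : ℤ) hb

theorem stmt_0_general {x a b : ℕ} (hx : Even x) (hx0 : x ≠ 0) (ha : a ≠ 0) (hb : b ≠ 0) :
    Nat.gcd (x ^ a + 1) (x ^ b + 1) = 1 ↔ padicValNat 2 a ≠ padicValNat 2 b := by
  constructor
  · intro hgcd hab
    have hdvd := pow_two_pow_padicValNat_add_one_dvd_gcd x ha hb hab
    rw [hgcd, Nat.dvd_one, Nat.add_eq_right] at hdvd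
    exact pow_ne_zero _ hx0 hdvd
  · intro hab
    have odd_pow_add_one : Odd (x ^ a + 1) := (hx.pow_of_ne_zero ha).add_one
    have odd_gcd : Odd (Nat.gcd (x ^ a + 1) (x ^ b + 1)) :=
      odd_pow_add_one.of_dvd_nat (Nat.gcd_dvd_left _ _)
    exact Nat.eq_one_of_dvd_coprimes odd_gcd.coprime_two_right dvd_rfl (gcd_pow_add_one_dvd_two hab)

/-- For all positive integers `a` and `b`, `gcd(2^a + 1, 2^b + 1) = 1` if and only if
the 2-adic valuations of `a` and `b` are different. -/
theorem stmt_0 (a b : ℕ) (ha : 0 < a) (hb : 0 < b) :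
    Nat.gcd (2 ^ a + 1) (2 ^ b + 1) = 1 ↔ padicValNat 2 a ≠ padicValNat 2 b :=
  stmt_0_general even_two two_ne_zero ha.ne' hb.ne'
end

section
/- Let p be a prime, d ≥ 1 an integer, and q = p^d − 1 ≥ 2. Let D > M ≥ 0 be integers with D ≥ 1, and let a_1, …, a_D, b_1, …, b_M ∈ {0, 1, …, q − 1} be such that all D + M of these numbers are pairwise distinct. Then the following two conditions are equivalent: (I) for every integer N with 1 ≤ N ≤ q − 1 and gcd(N, q) = 1 and every rational number x whose denominator is prime to p, one has ∑_{i=1}^{D} V(N·a_i/q + x) + ∑_{j=1}^{M} V(−N·b_j/q − x) ≥ (D + M − 1)/2; (II) for every such N and x, one has ∑_{i=1}^{D} V(N·a_i/q + x) + ∑_{j=1}^{M} V(−N·b_j/q − x) ≥ (D − 1)/2 + (1/D)·∑_{i=1}^{D} ∑_{j=1}^{M} V(N·(a_i − b_j)/q). -/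
/-- `IsVp p V` says that `V : ℚ → ℚ` is the Kubert `V`-function in characteristic `p`:
for any rational `x` (with denominator prime to `p`), any `k ≥ 1` and any integer `a`
with `0 ≤ a < p^k - 1` such that `x - a/(p^k - 1)` is an integer, `V x` equals the
base-`p` digit sum of `a` divided by `k (p - 1)`. -/
def IsVp (p : ℕ) (V : ℚ → ℚ) : Prop :=
  ∀ (x : ℚ) (k a : ℕ), 0 < k → a < p ^ k - 1 →
    (∃ z : ℤ, x - (a : ℚ) / ((p : ℚ) ^ k - 1) = (z : ℚ)) →
    V x = ((Nat.digits p a).sum : ℚ) / ((k : ℚ) * ((p : ℚ) - 1))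

/-!
Write `S x` for the left-hand side of the two inequalities, `S⁻ x` for its analogue with `N`
replaced by `-N` (equivalently by `q - N`), and `C` for the double sum in (II). The reflection
formula `V y + V (-y) = 1` for `y ∉ ℤ` gives `S (-t) + S⁻ t = D + M - 1` whenever `t` is one of the
points `N a_i / q`, `N b_j / q`. The lower bounds assumed for `S` and `S⁻` also add up to
`D + M - 1`, so both are equalities at these points. Under (I) we sum `S (-N a_i / q)` over `i`: by
reflection the result is `D (D - 1) / 2 + C`, which forces `C = D M / 2`. Under (II) we sum over the
`b_j` and get `(D - M) (C - D M / 2) = 0`. As soon as `C = D M / 2`, the two bounds are the same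
number.
-/

open Finset

section Reflection

variable {G 𝕜 σ ι κ : Type*} [AddCommGroup G] [Field 𝕜]
  {V : G → 𝕜} {γ : σ → G} {α : ι → G} {β : κ → G}

/-- `V` vanishes at `0` and satisfies the reflection formula `V y + V (-y) = 1` at the differences
`y` of distinct members of the family `γ`. -/
structure IsReflective (V : G → 𝕜) (γ : σ → G) : Prop where
  map_zero : V 0 = 0
  add_swap : Pairwise fun s t => V (γ s - γ t) + V (γ t - γ s) = 1

namespace IsReflective

lemma comp {τ : Type*} (h : IsReflective V γ) {f : τ → σ} (hf : Function.Injective f) :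
    IsReflective V (γ ∘ f) :=
  ⟨h.map_zero, fun _ _ hst => h.add_swap (hf.ne hst)⟩

lemma neg_swap (h : IsReflective V (Sum.elim α β)) : IsReflective V (Sum.elim (-β) (-α)) := by
  have h' := h.comp Sum.swap_leftInverse.injective
  refine ⟨h.map_zero, fun s t hst => ?_⟩
  rw [← h'.add_swap hst, add_comm]
  rcases s with j | i <;> rcases t with j' | i' <;> simp [sub_eq_add_neg, add_comm]

end IsReflective

variable [Fintype σ] [Fintype ι] [Fintype κ]

/-- The sum `∑ V (α i + x) + ∑ V (-β j - x)` that the `V`-test bounds from below. -/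
def kubertSum (V : G → 𝕜) (α : ι → G) (β : κ → G) (x : G) : 𝕜 :=
  ∑ i, V (α i + x) + ∑ j, V (-β j - x)

/-- The double sum `∑ V (α i - β j)` in the bound of condition (II). -/
def crossSum (V : G → 𝕜) (α : ι → G) (β : κ → G) : 𝕜 :=
  ∑ i, ∑ j, V (α i - β j)

lemma kubertSum_neg_swap (x : G) : kubertSum V (-β) (-α) (-x) = kubertSum V α β x := by
  simp [kubertSum, add_comm, sub_eq_add_neg]

lemma crossSum_neg_swap : crossSum V (-β) (-α) = crossSum V α β := by
  simp only [crossSum, Pi.neg_apply, neg_sub_neg]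
  exact sum_comm

namespace IsReflective

lemma sum_add_swap (h : IsReflective V γ) (t : σ) :
    ∑ s, (V (γ s - γ t) + V (γ t - γ s)) = (Fintype.card σ : 𝕜) - 1 := by
  classical
  have hterm (s : σ) : V (γ s - γ t) + V (γ t - γ s) = 1 - if s = t then 1 else 0 := by
    split_ifs with hst
    · simp [hst, h.map_zero]
    · rw [h.add_swap hst, sub_zero]
  simp [hterm]

lemma sum_sum_sub [NeZero (2 : 𝕜)] (h : IsReflective V γ) :
    ∑ t, ∑ s, V (γ s - γ t) = (Fintype.card σ : 𝕜) * (Fintype.card σ - 1) / 2 := by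
  have htotal : ∑ t, ∑ s, (V (γ s - γ t) + V (γ t - γ s)) =
      (Fintype.card σ : 𝕜) * (Fintype.card σ - 1) := by
    simp only [h.sum_add_swap, sum_const, card_univ, nsmul_eq_mul]
  simp only [sum_add_distrib] at htotal
  rw [sum_comm (f := fun t s => V (γ t - γ s)), ← two_mul] at htotal
  rw [← htotal, mul_div_cancel_left₀ _ two_ne_zero]

lemma kubertSum_add_kubertSum_neg (h : IsReflective V (Sum.elim α β)) (t : ι ⊕ κ) :
    kubertSum V α β (-Sum.elim α β t) + kubertSum V (-α) (-β) (Sum.elim α β t) =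
      (Fintype.card ι : 𝕜) + Fintype.card κ - 1 := by
  have hsum := h.sum_add_swap t
  simp only [Fintype.sum_sum_type, Fintype.card_sum, Nat.cast_add, sum_add_distrib, Sum.elim_inl,
    Sum.elim_inr] at hsum
  simp only [kubertSum, Pi.neg_apply, neg_neg, ← sub_eq_add_neg, neg_add_eq_sub, sub_neg_eq_add]
  rw [← hsum]
  ring

lemma sum_kubertSum [NeZero (2 : 𝕜)] (h : IsReflective V (Sum.elim α β)) :
    ∑ i, kubertSum V α β (-α i) =
      (Fintype.card ι : 𝕜) * (Fintype.card ι - 1) / 2 + crossSum V α β := by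
  have hα : IsReflective V α := h.comp Sum.inl_injective
  simp only [kubertSum, crossSum, sum_add_distrib, ← hα.sum_sum_sub, ← sub_eq_add_neg,
    sub_neg_eq_add, neg_add_eq_sub]

lemma crossSum_add_crossSum_neg (h : IsReflective V (Sum.elim α β)) :
    crossSum V α β + crossSum V (-α) (-β) = (Fintype.card ι : 𝕜) * Fintype.card κ := by
  have hterm (i : ι) (j : κ) : V (α i - β j) + V (β j - α i) = 1 :=
    h.add_swap (Sum.inl_ne_inr (a := i) (b := j))
  simp [crossSum, ← sum_add_distrib, neg_add_eq_sub, hterm]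

variable [LinearOrder 𝕜] [IsStrictOrderedRing 𝕜]

lemma crossSum_eq_of_le_kubertSum (h : IsReflective V (Sum.elim α β)) {c c' : 𝕜}
    (hadd : c + c' = Fintype.card ι + Fintype.card κ - 1)
    (hc : ∀ i, c ≤ kubertSum V α β (-α i)) (hc' : ∀ i, c' ≤ kubertSum V (-α) (-β) (α i)) :
    crossSum V α β = Fintype.card ι * c - Fintype.card ι * (Fintype.card ι - 1) / 2 := by
  have heq (i : ι) : kubertSum V α β (-α i) = c := by
    have hrefl : kubertSum V α β (-α i) + kubertSum V (-α) (-β) (α i) =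
      Fintype.card ι + Fintype.card κ - 1 := h.kubertSum_add_kubertSum_neg (Sum.inl i)
    linarith [hc i, hc' i]
  have hsum := h.sum_kubertSum
  simp only [heq, sum_const, card_univ, nsmul_eq_mul] at hsum
  linarith

lemma crossSum_eq_of_le_kubertSum' (h : IsReflective V (Sum.elim α β)) {c c' : 𝕜}
    (hadd : c + c' = Fintype.card ι + Fintype.card κ - 1)
    (hc : ∀ j, c ≤ kubertSum V α β (-β j)) (hc' : ∀ j, c' ≤ kubertSum V (-α) (-β) (β j)) :
    crossSum V α β = Fintype.card κ * c - Fintype.card κ * (Fintype.card κ - 1) / 2 := by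
  rw [← crossSum_neg_swap]
  refine h.neg_swap.crossSum_eq_of_le_kubertSum (c' := c') (by rw [hadd, add_comm (_ : 𝕜)])
    (fun j => ?_) (fun j => ?_)
  · rw [kubertSum_neg_swap]
    exact hc j
  · rw [Pi.neg_apply, kubertSum_neg_swap]
    exact hc' j

end IsReflective

variable [LinearOrder 𝕜]

/-- Condition (I) for the points `α`, `β`, with `x` ranging over `X`. -/
def UniformBound (V : G → 𝕜) (X : Set G) (α : ι → G) (β : κ → G) : Prop :=
  ∀ x ∈ X, ((Fintype.card ι : 𝕜) + Fintype.card κ - 1) / 2 ≤ kubertSum V α β x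

/-- Condition (II) for the points `α`, `β`, with `x` ranging over `X`. -/
def CrossBound (V : G → 𝕜) (X : Set G) (α : ι → G) (β : κ → G) : Prop :=
  ∀ x ∈ X, ((Fintype.card ι : 𝕜) - 1) / 2 + 1 / Fintype.card ι * crossSum V α β ≤
    kubertSum V α β x

variable [IsStrictOrderedRing 𝕜] {X : AddSubgroup G}

lemma UniformBound.crossSum_eq (h : IsReflective V (Sum.elim α β)) (hα : ∀ i, α i ∈ X)
    (hpos : UniformBound V X α β) (hneg : UniformBound V X (-α) (-β)) :
    crossSum V α β = (Fintype.card ι : 𝕜) * Fintype.card κ / 2 := by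
  rw [h.crossSum_eq_of_le_kubertSum (add_halves _) (fun i => hpos _ (X.neg_mem (hα i)))
    (fun i => hneg _ (hα i))]
  ring

lemma CrossBound.crossSum_eq [Nonempty ι] (h : IsReflective V (Sum.elim α β))
    (hcard : Fintype.card ι ≠ Fintype.card κ) (hβ : ∀ j, β j ∈ X)
    (hpos : CrossBound V X α β) (hneg : CrossBound V X (-α) (-β)) :
    crossSum V α β = (Fintype.card ι : 𝕜) * Fintype.card κ / 2 := by
  have hD : (Fintype.card ι : 𝕜) ≠ 0 := Nat.cast_ne_zero.2 Fintype.card_ne_zero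
  have hDM : (Fintype.card ι : 𝕜) - Fintype.card κ ≠ 0 :=
    sub_ne_zero.2 (Nat.cast_injective.ne hcard)
  have hadd : ((Fintype.card ι : 𝕜) - 1) / 2 + 1 / Fintype.card ι * crossSum V α β +
      ((Fintype.card ι - 1) / 2 + 1 / Fintype.card ι * crossSum V (-α) (-β)) =
        Fintype.card ι + Fintype.card κ - 1 := by
    rw [eq_sub_of_add_eq' h.crossSum_add_crossSum_neg]
    field_simp
    ring
  have hC := h.crossSum_eq_of_le_kubertSum' hadd
    (fun j => hpos _ (X.neg_mem (hβ j))) (fun j => hneg _ (hβ j))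
  have hfactor : ((Fintype.card ι : 𝕜) - Fintype.card κ) *
      (crossSum V α β - Fintype.card ι * Fintype.card κ / 2) = 0 := by
    field_simp at hC ⊢
    linear_combination hC
  exact sub_eq_zero.1 ((mul_eq_zero.1 hfactor).resolve_left hDM)

lemma uniformBound_iff_crossBound [Nonempty ι] {S : Set G}
    (hC : crossSum V α β = (Fintype.card ι : 𝕜) * Fintype.card κ / 2) :
    UniformBound V S α β ↔ CrossBound V S α β := by
  have hD : (Fintype.card ι : 𝕜) ≠ 0 := Nat.cast_ne_zero.2 Fintype.card_ne_zero
  have hbound : ((Fintype.card ι : 𝕜) + Fintype.card κ - 1) / 2 =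
      (Fintype.card ι - 1) / 2 + 1 / Fintype.card ι * crossSum V α β := by
    rw [hC]
    field_simp
    ring
  simp only [UniformBound, CrossBound, hbound]

theorem IsReflective.uniformBound_and_neg_iff [Nonempty ι] (h : IsReflective V (Sum.elim α β))
    (hcard : Fintype.card ι ≠ Fintype.card κ) (hα : ∀ i, α i ∈ X) (hβ : ∀ j, β j ∈ X) :
    (UniformBound V X α β ∧ UniformBound V X (-α) (-β)) ↔
      (CrossBound V X α β ∧ CrossBound V X (-α) (-β)) := by
  suffices hiff : crossSum V α β = (Fintype.card ι : 𝕜) * Fintype.card κ / 2 →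
      ((UniformBound V X α β ∧ UniformBound V X (-α) (-β)) ↔
        (CrossBound V X α β ∧ CrossBound V X (-α) (-β))) from
    ⟨fun hU => (hiff (UniformBound.crossSum_eq h hα hU.1 hU.2)).1 hU,
      fun hX => (hiff (CrossBound.crossSum_eq h hcard hβ hX.1 hX.2)).2 hX⟩
  intro hC
  have hC' : crossSum V (-α) (-β) = (Fintype.card ι : 𝕜) * Fintype.card κ / 2 := by
    linarith [h.crossSum_add_crossSum_neg]
  rw [uniformBound_iff_crossBound hC, uniformBound_iff_crossBound hC']

end Reflection

section KubertFunction

lemma digits_sum_add_base_mul {p : ℕ} (hp : 1 < p) {r : ℕ} (hr : r < p) (m : ℕ) :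
    (p.digits (r + p * m)).sum = r + (p.digits m).sum := by
  by_cases h : r ≠ 0 ∨ m ≠ 0
  · rw [Nat.digits_add p hp r m hr h, List.sum_cons]
  · obtain ⟨rfl, rfl⟩ : r = 0 ∧ m = 0 := by tauto
    simp

lemma digits_sum_add_digits_sum_of_add_eq {p : ℕ} (hp : 1 < p) {k a b : ℕ}
    (hab : a + b + 1 = p ^ k) : (p.digits a).sum + (p.digits b).sum = k * (p - 1) := by
  induction k generalizing a b with
  | zero =>
    obtain ⟨rfl, rfl⟩ : a = 0 ∧ b = 0 := by simpa using hab
    simp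
  | succ k ih =>
    have hp0 : 0 < p := by omega
    have ha := Nat.mod_lt a hp0
    have hb := Nat.mod_lt b hp0
    have hexpand : a % p + b % p + 1 + p * (a / p + b / p) = p * p ^ k := by
      rw [← pow_succ', ← hab]
      linarith [Nat.mod_add_div a p, Nat.mod_add_div b p]
    have hlow : a % p + b % p + 1 = p := by
      have hdvd : p ∣ a % p + b % p + 1 :=
        (Nat.dvd_add_left (dvd_mul_right p _)).1 (hexpand ▸ dvd_mul_right p _)
      exact Nat.eq_of_dvd_of_lt_two_mul (Nat.succ_ne_zero _) hdvd (by omega)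
    have hhigh : a / p + b / p + 1 = p ^ k := by
      apply Nat.eq_of_mul_eq_mul_left hp0
      rw [← hexpand, hlow]
      ring
    rw [← Nat.mod_add_div a p, ← Nat.mod_add_div b p, digits_sum_add_base_mul hp ha,
      digits_sum_add_base_mul hp hb, add_add_add_comm, ih hhigh, add_one_mul]
    omega

/-- The rationals whose denominator is coprime to `p`, which are those where `IsVp p V` determines
`V`. -/
def coprimeDen (p : ℕ) : AddSubgroup ℚ where
  carrier := {x | p.Coprime x.den}
  zero_mem' := Nat.coprime_one_right p
  add_mem' {x y} hx hy := (hx.mul_right hy).coprime_dvd_right (Rat.add_den_dvd x y)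
  neg_mem' {x} hx := by simpa using hx

lemma mem_coprimeDen {p : ℕ} {x : ℚ} : x ∈ coprimeDen p ↔ p.Coprime x.den := Iff.rfl

lemma intCast_div_mem_coprimeDen {p q : ℕ} (hpq : p.Coprime q) (c : ℤ) :
    (c : ℚ) / q ∈ coprimeDen p := by
  have hden : ((c : ℚ) / (q : ℤ)).den ∣ q := by
    simpa [Rat.divInt_eq_div, Int.natCast_dvd_natCast] using Rat.den_dvd c q
  exact hpq.coprime_dvd_right (by simpa using hden)

lemma coprime_pow_sub_one {p d : ℕ} (hp : 0 < p) (hd : d ≠ 0) : p.Coprime (p ^ d - 1) :=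
  ((Nat.coprime_self_sub_right (Nat.one_le_pow d p hp)).2
    (Nat.coprime_one_right _)).coprime_dvd_left (dvd_pow_self p hd)

lemma exists_eq_intCast_div_pow_sub_one {p : ℕ} (hp : 1 < p) {x : ℚ} (hx : x ∈ coprimeDen p) :
    ∃ k : ℕ, 0 < k ∧ ∃ c : ℤ, x = c / ((p : ℚ) ^ k - 1) := by
  have hk : 0 < x.den.totient := Nat.totient_pos.2 x.den_pos
  have hpow : 1 < p ^ x.den.totient := Nat.one_lt_pow hk.ne' hp
  obtain ⟨m, hm⟩ : x.den ∣ p ^ x.den.totient - 1 :=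
    (Nat.modEq_iff_dvd' hpow.le).1 (Nat.ModEq.pow_totient hx).symm
  have hm0 : (m : ℚ) ≠ 0 := by
    rw [Nat.cast_ne_zero]
    rintro rfl
    omega
  have hm_cast : (p : ℚ) ^ x.den.totient - 1 = x.den * m := by
    rw [← Nat.cast_mul, ← hm, Nat.cast_sub hpow.le, Nat.cast_pow, Nat.cast_one]
  refine ⟨x.den.totient, hk, x.num * m, ?_⟩
  rw [hm_cast, Int.cast_mul, Int.cast_natCast, mul_div_mul_right _ _ hm0, Rat.num_div_den]

lemma exists_intCast_div_sub_eq_intCast {n : ℕ} (hn : 0 < n) (c : ℤ) :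
    ∃ a < n, ∃ z : ℤ, (c : ℚ) / n - a / n = z := by
  have hn0 : (n : ℤ) ≠ 0 := by omega
  lift c % n to ℕ using Int.emod_nonneg c hn0 with a ha
  have ha_lt : (a : ℤ) < n := ha ▸ Int.emod_lt_of_pos c (by omega)
  refine ⟨a, by omega, c / n, ?_⟩
  have hdivision : (a : ℚ) + n * (c / n : ℤ) = c := by
    exact_mod_cast ha ▸ Int.emod_add_mul_ediv c n
  have hn0' : (n : ℚ) ≠ 0 := Nat.cast_ne_zero.2 hn.ne'
  rw [← sub_div, div_eq_iff hn0']
  linarith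

lemma exists_sub_div_pow_sub_one_eq_intCast {p : ℕ} (hp : 1 < p) {x : ℚ}
    (hx : x ∈ coprimeDen p) :
    ∃ k a : ℕ, 0 < k ∧ a < p ^ k - 1 ∧ ∃ z : ℤ, x - a / ((p : ℚ) ^ k - 1) = z := by
  obtain ⟨k, hk, c, rfl⟩ := exists_eq_intCast_div_pow_sub_one hp hx
  have hpow : 1 < p ^ k := Nat.one_lt_pow hk.ne' hp
  obtain ⟨a, ha, z, hz⟩ := exists_intCast_div_sub_eq_intCast (Nat.sub_pos_of_lt hpow) c
  rw [Nat.cast_sub hpow.le, Nat.cast_pow, Nat.cast_one] at hz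
  exact ⟨k, a, hk, ha, z, hz⟩

namespace IsVp

variable {p : ℕ} {V : ℚ → ℚ}

lemma map_zero (hp : 1 < p) (hV : IsVp p V) : V 0 = 0 := by
  simpa using hV 0 1 0 one_pos (by simpa using hp) ⟨0, by simp⟩

lemma map_add_intCast (hp : 1 < p) (hV : IsVp p V) {x : ℚ} (hx : x ∈ coprimeDen p) (z : ℤ) :
    V (x + z) = V x := by
  obtain ⟨k, a, hk, ha, y, hy⟩ := exists_sub_div_pow_sub_one_eq_intCast hp hx
  rw [hV x k a hk ha ⟨y, hy⟩, hV (x + z) k a hk ha ⟨y + z, by push_cast; linarith⟩]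

lemma map_add_map_neg (hp : 1 < p) (hV : IsVp p V) {x : ℚ} (hx : x ∈ coprimeDen p)
    (hx_int : ∀ z : ℤ, x ≠ z) : V x + V (-x) = 1 := by
  obtain ⟨k, a, hk, ha, z, hz⟩ := exists_sub_div_pow_sub_one_eq_intCast hp hx
  have ha0 : a ≠ 0 := by
    rintro rfl
    exact hx_int z (by simpa using hz)
  obtain ⟨b, hab⟩ : ∃ b, a + b + 1 = p ^ k := ⟨p ^ k - 1 - a, by omega⟩
  have hpow : (p : ℚ) ^ k - 1 = a + b := by
    rw [sub_eq_iff_eq_add]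
    exact_mod_cast hab.symm
  have hab0 : (a + b : ℚ) ≠ 0 := by positivity
  have hneg : -x - b / ((p : ℚ) ^ k - 1) = (-z - 1 : ℤ) := by
    rw [hpow] at hz ⊢
    push_cast
    rw [← hz]
    field_simp
    ring
  rw [hV x k a hk ha ⟨z, hz⟩, hV (-x) k b hk (by omega) ⟨_, hneg⟩, ← add_div, ← Nat.cast_add,
    digits_sum_add_digits_sum_of_add_eq hp hab, Nat.cast_mul, Nat.cast_pred (by omega)]
  have hp' : (p : ℚ) - 1 ≠ 0 := sub_ne_zero.2 (by exact_mod_cast hp.ne')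
  exact div_self (mul_ne_zero (by exact_mod_cast hk.ne') hp')

lemma isReflective {σ : Type*} (hp : 1 < p) (hV : IsVp p V) {γ : σ → ℚ}
    (hγ : ∀ s, γ s ∈ coprimeDen p) (hdiff : Pairwise fun s t => ∀ z : ℤ, γ s - γ t ≠ z) :
    IsReflective V γ where
  map_zero := hV.map_zero hp
  add_swap s t hst := by
    simpa using hV.map_add_map_neg hp (sub_mem (hγ s) (hγ t)) (hdiff hst)

variable {ι κ : Type*} [Fintype ι] [Fintype κ] {α : ι → ℚ} {β : κ → ℚ}

lemma kubertSum_add_intCast (hp : 1 < p) (hV : IsVp p V) (hα : ∀ i, α i ∈ coprimeDen p)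
    (hβ : ∀ j, β j ∈ coprimeDen p) (m : ι → ℤ) (n : κ → ℤ) {x : ℚ} (hx : x ∈ coprimeDen p) :
    kubertSum V (fun i => α i + m i) (fun j => β j + n j) x = kubertSum V α β x := by
  have hα' (i : ι) : V (α i + m i + x) = V (α i + x) := by
    rw [← hV.map_add_intCast hp (add_mem (hα i) hx) (m i), add_right_comm]
  have hβ' (j : κ) : V (-(β j + n j) - x) = V (-β j - x) := by
    rw [← hV.map_add_intCast hp (sub_mem (neg_mem (hβ j)) hx) (-n j)]
    congr 1
    push_cast
    ring
  simp only [kubertSum, hα', hβ']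

lemma crossSum_add_intCast (hp : 1 < p) (hV : IsVp p V) (hα : ∀ i, α i ∈ coprimeDen p)
    (hβ : ∀ j, β j ∈ coprimeDen p) (m : ι → ℤ) (n : κ → ℤ) :
    crossSum V (fun i => α i + m i) (fun j => β j + n j) = crossSum V α β := by
  refine sum_congr rfl fun i _ => sum_congr rfl fun j _ => ?_
  rw [← hV.map_add_intCast hp (sub_mem (hα i) (hβ j)) (m i - n j)]
  congr 1
  push_cast
  ring

lemma uniformBound_add_intCast (hp : 1 < p) (hV : IsVp p V) (hα : ∀ i, α i ∈ coprimeDen p)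
    (hβ : ∀ j, β j ∈ coprimeDen p) (m : ι → ℤ) (n : κ → ℤ) :
    UniformBound V (coprimeDen p) (fun i => α i + m i) (fun j => β j + n j) ↔
      UniformBound V (coprimeDen p) α β :=
  forall₂_congr fun x hx => by rw [hV.kubertSum_add_intCast hp hα hβ m n hx]

lemma crossBound_add_intCast (hp : 1 < p) (hV : IsVp p V) (hα : ∀ i, α i ∈ coprimeDen p)
    (hβ : ∀ j, β j ∈ coprimeDen p) (m : ι → ℤ) (n : κ → ℤ) :
    CrossBound V (coprimeDen p) (fun i => α i + m i) (fun j => β j + n j) ↔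
      CrossBound V (coprimeDen p) α β :=
  forall₂_congr fun x hx => by
    rw [hV.kubertSum_add_intCast hp hα hβ m n hx, hV.crossSum_add_intCast hp hα hβ m n]

end IsVp

end KubertFunction

section Scaling

variable {ι κ σ : Type*}

/-- The points `N c_s / q` obtained from the integers `c_s`. -/
def scaledPoints (q N : ℕ) (c : σ → ℤ) (s : σ) : ℚ := N * c s / q

lemma scaledPoints_mem_coprimeDen {p q : ℕ} (hpq : p.Coprime q) (N : ℕ) (c : σ → ℤ) (s : σ) :
    scaledPoints q N c s ∈ coprimeDen p := by
  simpa [scaledPoints] using intCast_div_mem_coprimeDen hpq (N * c s)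

lemma scaledPoints_sub_ne_intCast {q N : ℕ} (hq : q ≠ 0) (hN : N.Coprime q) {c : σ → ℤ}
    (hc : Function.Injective fun s => (c s : ZMod q)) :
    Pairwise fun s t => ∀ z : ℤ, scaledPoints q N c s - scaledPoints q N c t ≠ z := by
  intro s t hst z hz
  have hmul : (N : ℤ) * (c s - c t) = q * z := by
    have hq' : (q : ℚ) ≠ 0 := Nat.cast_ne_zero.2 hq
    rw [scaledPoints, scaledPoints, ← sub_div, div_eq_iff hq', ← mul_sub] at hz
    rw [mul_comm (q : ℤ)]
    exact_mod_cast hz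
  have hdvd : (q : ℤ) ∣ c s - c t :=
    (Nat.isCoprime_iff_coprime.2 hN).symm.dvd_of_dvd_mul_left ⟨z, hmul⟩
  exact hst (hc ((ZMod.intCast_eq_intCast_iff_dvd_sub _ _ _).2 hdvd).symm)

lemma scaledPoints_sub {q N : ℕ} (hq : q ≠ 0) (hN : N ≤ q) (c : σ → ℤ) :
    scaledPoints q (q - N) c = fun s => (-scaledPoints q N c) s + c s := by
  ext s
  simp only [scaledPoints, Pi.neg_apply, Nat.cast_sub hN]
  field_simp
  ring

lemma sumElim_scaledPoints (q N : ℕ) (a : ι → ℤ) (b : κ → ℤ) :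
    Sum.elim (scaledPoints q N a) (scaledPoints q N b) = scaledPoints q N (Sum.elim a b) := by
  ext (i | j) <;> rfl

lemma injective_sumElim_intCast_zmod {q : ℕ} {a : ι → ℕ} {b : κ → ℕ} (ha : ∀ i, a i < q)
    (hb : ∀ j, b j < q) (hainj : Function.Injective a) (hbinj : Function.Injective b)
    (hab : ∀ i j, a i ≠ b j) :
    Function.Injective fun s =>
      ((Sum.elim (fun i => (a i : ℤ)) (fun j => (b j : ℤ)) s : ℤ) : ZMod q) := by
  have hlt (s : ι ⊕ κ) : Sum.elim a b s < q := by
    rcases s with i | j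
    exacts [ha i, hb j]
  intro s t hst
  refine hainj.sumElim hbinj hab (CharP.natCast_injOn_Iio (ZMod q) q (hlt s) (hlt t) ?_)
  rcases s with i | j <;> rcases t with i' | j' <;> simpa using hst

lemma crossSum_scaledPoints [Fintype ι] [Fintype κ] (V : ℚ → ℚ) (q N : ℕ) (a : ι → ℤ)
    (b : κ → ℤ) :
    crossSum V (scaledPoints q N a) (scaledPoints q N b) =
      ∑ i, ∑ j, V (N * (a i - b j) / q) := by
  simp only [crossSum, scaledPoints, ← sub_div, ← mul_sub]

end Scaling

lemma IsVp.uniformBound_scaledPoints_and_sub_iff {ι κ : Type*} [Fintype ι] [Fintype κ] [Nonempty ι]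
    {p q N : ℕ} {V : ℚ → ℚ} (hV : IsVp p V) (hcard : Fintype.card ι ≠ Fintype.card κ) (hp : 1 < p)
    (hq : q ≠ 0) (hpq : p.Coprime q) {a : ι → ℤ} {b : κ → ℤ}
    (hab : Function.Injective fun s => ((Sum.elim a b s : ℤ) : ZMod q))
    (hN_le : N ≤ q) (hN : N.Coprime q) :
    (UniformBound V (coprimeDen p) (scaledPoints q N a) (scaledPoints q N b) ∧
        UniformBound V (coprimeDen p) (scaledPoints q (q - N) a) (scaledPoints q (q - N) b)) ↔
      (CrossBound V (coprimeDen p) (scaledPoints q N a) (scaledPoints q N b) ∧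
        CrossBound V (coprimeDen p) (scaledPoints q (q - N) a) (scaledPoints q (q - N) b)) := by
  have ha := scaledPoints_mem_coprimeDen hpq N a
  have hb := scaledPoints_mem_coprimeDen hpq N b
  have ha_neg (i : ι) : (-scaledPoints q N a) i ∈ coprimeDen p := neg_mem (ha i)
  have hb_neg (j : κ) : (-scaledPoints q N b) j ∈ coprimeDen p := neg_mem (hb j)
  have hreflective : IsReflective V (Sum.elim (scaledPoints q N a) (scaledPoints q N b)) := by
    rw [sumElim_scaledPoints]
    exact hV.isReflective hp (scaledPoints_mem_coprimeDen hpq N _)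
      (scaledPoints_sub_ne_intCast hq hN hab)
  rw [scaledPoints_sub hq hN_le, scaledPoints_sub hq hN_le,
    hV.uniformBound_add_intCast hp ha_neg hb_neg, hV.crossBound_add_intCast hp ha_neg hb_neg]
  exact hreflective.uniformBound_and_neg_iff hcard ha hb

theorem stmt_1_general {ι κ : Type*} [Fintype ι] [Fintype κ] [Nonempty ι]
    (hcard : Fintype.card ι ≠ Fintype.card κ) {p q : ℕ} (hp : 1 < p) (hpq : p.Coprime q)
    {a : ι → ℤ} {b : κ → ℤ} (hab : Function.Injective fun s => ((Sum.elim a b s : ℤ) : ZMod q))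
    {V : ℚ → ℚ} (hV : IsVp p V) :
    (∀ N : ℕ, 1 ≤ N → N ≤ q - 1 → N.Coprime q →
        UniformBound V (coprimeDen p) (scaledPoints q N a) (scaledPoints q N b)) ↔
      (∀ N : ℕ, 1 ≤ N → N ≤ q - 1 → N.Coprime q →
        CrossBound V (coprimeDen p) (scaledPoints q N a) (scaledPoints q N b)) := by
  have hq : q ≠ 0 := by
    rintro rfl
    exact hp.ne' (Nat.coprime_zero_right p |>.1 hpq)
  have hiff {N : ℕ} := hV.uniformBound_scaledPoints_and_sub_iff (N := N) hcard hp hq hpq hab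
  have hreflect {N : ℕ} (hN_le : N ≤ q - 1) (hN : N.Coprime q) : (q - N).Coprime q :=
    (Nat.coprime_self_sub_left (by omega)).2 hN
  constructor <;> intro h N hN_pos hN_le hN
  · exact ((hiff (by omega) hN).1 ⟨h N hN_pos hN_le hN,
      h (q - N) (by omega) (by omega) (hreflect hN_le hN)⟩).1
  · exact ((hiff (by omega) hN).2 ⟨h N hN_pos hN_le hN,
      h (q - N) (by omega) (by omega) (hreflect hN_le hN)⟩).1

/-- Kubert's `V`-test criterion: the inequality with right-hand side `(D + M - 1)/2`
holds for all admissible `(N, x)` iff the inequality with right-hand side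
`(D-1)/2 + (1/D) ∑_{i,j} V(N (a_i - b_j)/q)` does. -/
theorem stmt_1 (p : ℕ) (hp : p.Prime) (d : ℕ) (hd : 1 ≤ d) (q : ℕ)
    (hq : q = p ^ d - 1) (hq2 : 2 ≤ q)
    (D M : ℕ) (hD : 1 ≤ D) (hDM : M < D)
    (a : Fin D → ℕ) (b : Fin M → ℕ)
    (ha : ∀ i, a i < q) (hb : ∀ j, b j < q)
    (hainj : Function.Injective a) (hbinj : Function.Injective b)
    (hab : ∀ i j, a i ≠ b j)
    (V : ℚ → ℚ) (hV : IsVp p V) :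
    (∀ N : ℕ, 1 ≤ N → N ≤ q - 1 → Nat.Coprime N q →
        ∀ x : ℚ, ¬ (p ∣ x.den) →
        (∑ i, V ((N : ℚ) * (a i : ℚ) / (q : ℚ) + x)) +
          (∑ j, V (-((N : ℚ) * (b j : ℚ) / (q : ℚ)) - x)) ≥
          ((D : ℚ) + (M : ℚ) - 1) / 2) ↔
      (∀ N : ℕ, 1 ≤ N → N ≤ q - 1 → Nat.Coprime N q →
        ∀ x : ℚ, ¬ (p ∣ x.den) →
        (∑ i, V ((N : ℚ) * (a i : ℚ) / (q : ℚ) + x)) +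
          (∑ j, V (-((N : ℚ) * (b j : ℚ) / (q : ℚ)) - x)) ≥
          ((D : ℚ) - 1) / 2 +
            (1 / (D : ℚ)) * ∑ i, ∑ j, V ((N : ℚ) * ((a i : ℚ) - (b j : ℚ)) / (q : ℚ))) := by
  have : Nonempty (Fin D) := ⟨⟨0, hD⟩⟩
  simpa only [UniformBound, CrossBound, kubertSum, crossSum_scaledPoints, scaledPoints,
    SetLike.mem_coe, mem_coprimeDen, hp.coprime_iff_not_dvd, Fintype.card_fin, Int.cast_natCast]
    using stmt_1_general (by simpa using hDM.ne') hp.one_lt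
      (hq ▸ coprime_pow_sub_one hp.pos (Nat.one_le_iff_ne_zero.1 hd))
      (injective_sumElim_intCast_zmod ha hb hainj hbinj hab) hV
end

section
/- For every positive integer r and every rational number x with odd denominator, one has V((2^r + 1)·x) ≤ 2·V(x) ≤ V((2^r + 1)·x) + 1. -/
/-- `IsV2 V` says that `V : ℚ → ℚ` is the Kubert `V`-function in characteristic 2:
for any rational `x` (with odd denominator), any `k ≥ 1` and any integer `a` with
`0 ≤ a < 2^k - 1` such that `x - a/(2^k - 1)` is an integer, `V x` equals the
binary digit sum of `a` divided by `k`. -/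
def IsV2 (V : ℚ → ℚ) : Prop :=
  ∀ (x : ℚ) (k a : ℕ), 0 < k → a < 2 ^ k - 1 →
    (∃ z : ℤ, x - (a : ℚ) / ((2 : ℚ) ^ k - 1) = (z : ℚ)) →
    V x = ((Nat.digits 2 a).sum : ℚ) / (k : ℚ)

/-!
Write `s` for the binary digit sum and `N = 2 ^ k - 1`. Since `2 ^ k ≡ 1` modulo `N`, reducing a
natural number modulo `N` adds up its blocks of `k` binary digits, and `s` is subadditive (each
carry replaces two ones by a single one), so `V x ≤ s(a) / k` whenever `x ≡ a / N` modulo `1`, even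
if `a` is not reduced. Hence `V (x + y) ≤ V x + V y` and `V (2 ^ r * x) ≤ V x`, while complementing
all `k` digits gives `V x + V (-x) ≤ 1`. The first two facts bound `V ((2 ^ r + 1) * x)` by
`2 * V x`. For the other bound, write `x = (2 ^ r + 1) * x + 2 ^ r * (-x)`, which yields
`V x ≤ V ((2 ^ r + 1) * x) + V (-x) ≤ V ((2 ^ r + 1) * x) + (1 - V x)`.
-/

section DigitSum

variable (b : ℕ)

theorem digits_sum_eq_mod_add_div (n : ℕ) :
    (b.digits n).sum = n % b + (b.digits (n / b)).sum := by
  obtain rfl | rfl | hb : b = 0 ∨ b = 1 ∨ 1 < b := by omega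
  · cases n <;> simp
  · simp [Nat.mod_one]
  · obtain rfl | hn := n.eq_zero_or_pos
    · simp
    · rw [Nat.digits_def' hb hn, List.sum_cons]

theorem digits_sum_add_le (m n : ℕ) :
    (b.digits (m + n)).sum ≤ (b.digits m).sum + (b.digits n).sum := by
  obtain rfl | rfl | hb : b = 0 ∨ b = 1 ∨ 1 < b := by omega
  · cases m <;> cases n <;> simp [← add_assoc]
  · simp
  induction h : m + n using Nat.strong_induction_on generalizing m n with
  | _ t ih =>
    subst h
    obtain rfl | hm := m.eq_zero_or_pos
    · simp
    obtain rfl | hn := n.eq_zero_or_pos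
    · simp
    have hm_lt : m / b < m := Nat.div_lt_self hm hb
    have hn_lt : n / b < n := Nat.div_lt_self hn hb
    rw [digits_sum_eq_mod_add_div b (m + n), digits_sum_eq_mod_add_div b m,
      digits_sum_eq_mod_add_div b n, Nat.add_div (by omega)]
    split_ifs with hcarry
    · have hmod := Nat.add_mod_add_of_le_add_mod hcarry
      have hsucc : (b.digits (n / b + 1)).sum ≤ (b.digits (n / b)).sum + 1 := by
        simpa [Nat.digits_of_lt b 1 one_ne_zero hb] using ih _ (by omega) (n / b) 1 rfl
      have hadd := ih _ (by omega) (m / b) (n / b + 1) rfl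
      rw [← add_assoc] at hadd
      omega
    · have hmod := Nat.add_mod_of_add_mod_lt (not_le.1 hcarry)
      have hadd := ih _ (by omega) (m / b) (n / b) rfl
      rw [add_zero]
      omega

theorem digits_sum_eq_div_pow_add_mod_pow (k n : ℕ) :
    (b.digits n).sum = (b.digits (n / b ^ k)).sum + (b.digits (n % b ^ k)).sum := by
  induction k generalizing n with
  | zero => simp [Nat.mod_one]
  | succ k ih =>
    have hdiv : n / b / b ^ k = n / b ^ (k + 1) := by rw [Nat.div_div_eq_div_mul, pow_succ']
    have hmod : n % b ^ (k + 1) % b = n % b :=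
      Nat.mod_mod_of_dvd _ (dvd_pow_self b k.succ_ne_zero)
    have hmod_div : n % b ^ (k + 1) / b = n / b % b ^ k := by
      rw [pow_succ', Nat.mod_mul_right_div_self]
    rw [digits_sum_eq_mod_add_div b n, digits_sum_eq_mod_add_div b (n % b ^ (k + 1)), ih (n / b),
      hdiv, hmod, hmod_div, add_left_comm]

variable {b}

theorem digits_sum_base_pow_mul (hb : 0 < b) (k n : ℕ) :
    (b.digits (b ^ k * n)).sum = (b.digits n).sum := by
  rw [digits_sum_eq_div_pow_add_mod_pow b k (b ^ k * n), Nat.mul_div_cancel_left n (pow_pos hb k)]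
  simp

theorem digits_sum_mod_base_pow_sub_one_le (hb : 0 < b) (k n : ℕ) :
    (b.digits (n % (b ^ k - 1))).sum ≤ (b.digits n).sum := by
  induction n using Nat.strong_induction_on with
  | _ n ih =>
    obtain ⟨N, hN⟩ : ∃ N, b ^ k = N + 1 := Nat.exists_eq_add_one.2 (pow_pos hb k)
    rw [hN, Nat.add_sub_cancel] at ih ⊢
    obtain hlt | rfl | hgt := lt_trichotomy n N
    · rw [Nat.mod_eq_of_lt hlt]
    · simp
    obtain rfl | hNpos := N.eq_zero_or_pos
    · simp
    set q := n / (N + 1) with hq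
    set t := n % (N + 1) with ht
    have hqt : n = q + t + N * q := by rw [← Nat.div_add_mod n (N + 1)]; ring
    have hfold_lt : q + t < n := by
      have hqpos : 0 < N * q := Nat.mul_pos hNpos (Nat.div_pos hgt N.succ_pos)
      omega
    calc (b.digits (n % N)).sum = (b.digits ((q + t) % N)).sum := by
          rw [hqt, Nat.add_mul_mod_self_left]
      _ ≤ (b.digits (q + t)).sum := ih _ hfold_lt
      _ ≤ (b.digits q).sum + (b.digits t).sum := digits_sum_add_le b q t
      _ = (b.digits n).sum := by
          rw [hq, ht, ← hN, ← digits_sum_eq_div_pow_add_mod_pow b k n]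

theorem digits_sum_add_digits_sum_of_add_add_one_eq_pow {k m n : ℕ} (h : m + n + 1 = b ^ k) :
    (b.digits m).sum + (b.digits n).sum = k * (b - 1) := by
  induction k generalizing m n with
  | zero =>
    obtain ⟨rfl, rfl⟩ : m = 0 ∧ n = 0 := by simpa using h
    simp
  | succ k ih =>
    have hb : 0 < b := Nat.pos_of_ne_zero fun hb ↦ by simp [hb] at h
    have hsplit : b * (m / b + n / b) + (m % b + n % b + 1) = b * b ^ k := by
      rw [← pow_succ', ← h]
      linarith [Nat.div_add_mod m b, Nat.div_add_mod n b]
    have hlast : m % b + n % b + 1 = b := by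
      have hdvd : b ∣ m % b + n % b + 1 :=
        (Nat.dvd_add_right ⟨_, rfl⟩).1 (hsplit ▸ Nat.dvd_mul_right b (b ^ k))
      have hm_lt := Nat.mod_lt m hb
      have hn_lt := Nat.mod_lt n hb
      exact Nat.eq_of_dvd_of_lt_two_mul (Nat.succ_ne_zero _) hdvd (by omega)
    have hrest : m / b + n / b + 1 = b ^ k := by
      rw [hlast, ← Nat.mul_succ] at hsplit
      exact Nat.eq_of_mul_eq_mul_left hb hsplit
    have hsum := ih hrest
    rw [digits_sum_eq_mod_add_div b m, digits_sum_eq_mod_add_div b n, Nat.succ_mul]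
    omega

end DigitSum

section Representation

open AddCommGroup

theorem exists_pos_dvd_pow_sub_one {b n : ℕ} (hn : n ≠ 0) (h : b.Coprime n) :
    ∃ k, 0 < k ∧ n ∣ b ^ k - 1 := by
  obtain rfl | hb := b.eq_zero_or_pos
  · exact ⟨1, one_pos, by simp⟩
  · exact ⟨n.totient, Nat.totient_pos.2 (Nat.pos_of_ne_zero hn),
      (Nat.modEq_iff_dvd' (Nat.one_le_pow _ _ hb)).1 (Nat.ModEq.pow_totient h).symm⟩

theorem exists_lt_modEq_div_of_den_dvd {x : ℚ} {N : ℕ} (hN : N ≠ 0) (h : x.den ∣ N) :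
    ∃ a < N, x ≡ a / N [PMOD 1] := by
  obtain ⟨d, rfl⟩ := h
  set N := x.den * d
  have hNQ : (N : ℚ) ≠ 0 := Nat.cast_ne_zero.2 hN
  have hNZ : (N : ℤ) ≠ 0 := Nat.cast_ne_zero.2 hN
  obtain ⟨a, ha⟩ := Int.eq_ofNat_of_zero_le (Int.emod_nonneg (x.num * d) hNZ)
  have ha_lt : (a : ℤ) < N := ha ▸ Int.emod_lt_of_pos _ (by positivity)
  have hx : x = (x.num * d : ℤ) / N := by
    rw [eq_div_iff hNQ]
    push_cast [N]
    rw [← mul_assoc, Rat.mul_den_eq_num]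
  have hmod : ((x.num * d : ℤ) : ℚ) ≡ (a : ℤ) [PMOD (N : ℚ)] := by
    rw [intCast_modEq_intCast', modEq_iff_intModEq, ← ha]
    exact (Int.mod_modEq _ _).symm
  refine ⟨a, by exact_mod_cast ha_lt, ?_⟩
  rw [hx, div_modEq_div hNQ, one_mul]
  exact_mod_cast hmod

theorem exists_lt_modEq_div_two_pow_sub_one {x : ℚ} {k : ℕ} (hk : 0 < k)
    (h : x.den ∣ 2 ^ k - 1) : ∃ a : ℕ, a < 2 ^ k - 1 ∧ x ≡ a / (2 ^ k - 1) [PMOD 1] := by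
  have hne : 2 ^ k - 1 ≠ 0 := (Nat.sub_pos_of_lt (Nat.one_lt_two_pow hk.ne')).ne'
  simpa using exists_lt_modEq_div_of_den_dvd hne h

theorem odd_den_intCast_mul {x : ℚ} (hx : Odd x.den) (m : ℤ) : Odd (m * x).den :=
  hx.of_dvd_nat (by simpa using Rat.mul_den_dvd m x)

end Representation

namespace IsV2

open AddCommGroup

variable {V : ℚ → ℚ} {x y : ℚ} {k a : ℕ}

theorem eq_of_modEq (hV : IsV2 V) (hk : 0 < k) (ha : a < 2 ^ k - 1)
    (h : x ≡ a / (2 ^ k - 1) [PMOD 1]) : V x = (Nat.digits 2 a).sum / k := by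
  obtain ⟨z, hz⟩ := modEq_iff_zsmul'.1 h.symm
  exact hV x k a hk ha ⟨z, by simpa using hz⟩

theorem le_of_modEq (hV : IsV2 V) (hk : 0 < k) (h : x ≡ a / (2 ^ k - 1) [PMOD 1]) :
    V x ≤ (Nat.digits 2 a).sum / k := by
  have hpos : 0 < 2 ^ k - 1 := Nat.sub_pos_of_lt (Nat.one_lt_two_pow hk.ne')
  have hcast : ((2 ^ k - 1 : ℕ) : ℚ) = 2 ^ k - 1 := by simp
  have hreduce : (a : ℚ) / (2 ^ k - 1) ≡ (a % (2 ^ k - 1) : ℕ) / (2 ^ k - 1) [PMOD 1] := by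
    rw [← hcast, div_modEq_div (Nat.cast_ne_zero.2 hpos.ne'), one_mul, natCast_modEq_natCast]
    exact (Nat.mod_modEq _ _).symm
  rw [hV.eq_of_modEq hk (Nat.mod_lt a hpos) (h.trans hreduce)]
  gcongr
  exact digits_sum_mod_base_pow_sub_one_le two_pos k a

theorem add_le (hV : IsV2 V) (hx : Odd x.den) (hy : Odd y.den) : V (x + y) ≤ V x + V y := by
  obtain ⟨k, hk, hdvd⟩ := exists_pos_dvd_pow_sub_one (mul_ne_zero x.den_nz y.den_nz)
    (Nat.coprime_two_left.2 (hx.mul hy))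
  obtain ⟨a, ha, hxa⟩ := exists_lt_modEq_div_two_pow_sub_one hk (dvd_of_mul_right_dvd hdvd)
  obtain ⟨c, hc, hyc⟩ := exists_lt_modEq_div_two_pow_sub_one hk (dvd_of_mul_left_dvd hdvd)
  have hxy : x + y ≡ (a + c : ℕ) / (2 ^ k - 1) [PMOD 1] := by
    simpa only [Nat.cast_add, add_div] using hxa.add hyc
  calc V (x + y) ≤ (Nat.digits 2 (a + c)).sum / k := hV.le_of_modEq hk hxy
    _ ≤ ((Nat.digits 2 a).sum + (Nat.digits 2 c).sum : ℕ) / k := by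
        gcongr
        exact digits_sum_add_le 2 a c
    _ = V x + V y := by
        rw [Nat.cast_add, add_div, hV.eq_of_modEq hk ha hxa, hV.eq_of_modEq hk hc hyc]

theorem two_pow_mul_le (hV : IsV2 V) (hx : Odd x.den) (r : ℕ) : V (2 ^ r * x) ≤ V x := by
  obtain ⟨k, hk, hdvd⟩ := exists_pos_dvd_pow_sub_one x.den_nz (Nat.coprime_two_left.2 hx)
  obtain ⟨a, ha, hxa⟩ := exists_lt_modEq_div_two_pow_sub_one hk hdvd
  have hmul : 2 ^ r * x ≡ (2 ^ r * a : ℕ) / (2 ^ k - 1) [PMOD 1] := by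
    simpa [mul_div_assoc] using (hxa.nsmul (n := 2 ^ r)).of_nsmul
  calc V (2 ^ r * x) ≤ (Nat.digits 2 (2 ^ r * a)).sum / k := hV.le_of_modEq hk hmul
    _ = V x := by rw [digits_sum_base_pow_mul two_pos, hV.eq_of_modEq hk ha hxa]

theorem add_neg_le_one (hV : IsV2 V) (hx : Odd x.den) : V x + V (-x) ≤ 1 := by
  obtain ⟨k, hk, hdvd⟩ := exists_pos_dvd_pow_sub_one x.den_nz (Nat.coprime_two_left.2 hx)
  obtain ⟨a, ha, hxa⟩ := exists_lt_modEq_div_two_pow_sub_one hk hdvd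
  obtain ⟨c, hac⟩ : ∃ c, a + c + 1 = 2 ^ k := ⟨2 ^ k - 1 - a, by omega⟩
  have hneg : -x ≡ c / (2 ^ k - 1) [PMOD 1] := by
    have hacQ : (a + c + 1 : ℚ) = 2 ^ k := by exact_mod_cast hac
    have hne : (2 ^ k - 1 : ℚ) ≠ 0 := (sub_pos.2 (one_lt_pow₀ one_lt_two hk.ne')).ne'
    have hcompl : (c : ℚ) / (2 ^ k - 1) = -(a / (2 ^ k - 1)) + 1 := by
      field_simp
      linarith
    rw [hcompl]
    simpa using (neg_modEq_neg.2 hxa).trans (add_nsmul_modEq 1).symm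
  have hsum : (Nat.digits 2 a).sum + (Nat.digits 2 c).sum = k := by
    simpa using digits_sum_add_digits_sum_of_add_add_one_eq_pow hac
  calc V x + V (-x) ≤ (Nat.digits 2 a).sum / k + (Nat.digits 2 c).sum / k := by
        rw [hV.eq_of_modEq hk ha hxa]
        gcongr
        exact hV.le_of_modEq hk hneg
    _ = 1 := by rw [← add_div, ← Nat.cast_add, hsum, div_self (Nat.cast_ne_zero.2 hk.ne')]

end IsV2

/-- For every positive integer `r` and every rational `x` with odd denominator,
`V((2^r + 1)x) ≤ 2 V(x) ≤ V((2^r + 1)x) + 1`. -/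
theorem stmt_2 (V : ℚ → ℚ) (hV : IsV2 V) (r : ℕ) (hr : 0 < r)
    (x : ℚ) (hx : Odd x.den) :
    V (((2 : ℚ) ^ r + 1) * x) ≤ 2 * V x ∧
      2 * V x ≤ V (((2 : ℚ) ^ r + 1) * x) + 1 := by
  have hneg : Odd (-x).den := by rwa [Rat.den_neg_eq_den]
  have hpow {y : ℚ} (hy : Odd y.den) : Odd (2 ^ r * y).den := by
    exact_mod_cast odd_den_intCast_mul hy (2 ^ r)
  have hmul : Odd ((2 ^ r + 1) * x).den := by exact_mod_cast odd_den_intCast_mul hx (2 ^ r + 1)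
  constructor
  · calc V ((2 ^ r + 1) * x) = V (2 ^ r * x + x) := by rw [add_one_mul]
      _ ≤ V (2 ^ r * x) + V x := hV.add_le (hpow hx) hx
      _ ≤ 2 * V x := by linarith [hV.two_pow_mul_le hx r]
  · have hx_le : V x ≤ V ((2 ^ r + 1) * x) + V (-x) :=
      calc V x = V ((2 ^ r + 1) * x + 2 ^ r * -x) := by ring_nf
        _ ≤ V ((2 ^ r + 1) * x) + V (2 ^ r * -x) := hV.add_le hmul (hpow hneg)
        _ ≤ V ((2 ^ r + 1) * x) + V (-x) := by gcongr; exact hV.two_pow_mul_le hneg r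
    linarith [hV.add_neg_le_one hx]
end

section
/- For every positive integer r and every rational number x with odd denominator, if V((2^r + 1)·x) = 0 then V(x) = 0 or V(x) = 1/2. -/
/-!
Doubling `x = a / (2 ^ k - 1)` modulo `1` rotates the `k` binary digits of `a`, and negating `x`
complements them. Hence `V` is invariant under doubling, and `V x + V (-x) = 1` when `x ∉ ℤ`.
On odd denominators `V` vanishes only at integers, so the hypothesis says `2 ^ r * x ≡ -x` modulo
`1`, whence `V x = V (2 ^ r * x) = V (-x)` and, when `x ∉ ℤ`, both values are `1 / 2`.
-/

section DigitSum

variable {b : ℕ}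

theorem sum_digits_eq_zero_iff {n : ℕ} : (b.digits n).sum = 0 ↔ n = 0 := by
  refine ⟨fun h => ?_, fun h => by simp [h]⟩
  by_contra hn
  exact Nat.getLast_digit_ne_zero b hn (List.sum_eq_zero_iff.mp h _ (List.getLast_mem _))

theorem sum_digits_mul_pow_add (hb : 1 < b) {k m : ℕ} (hm : m < b ^ k) (c : ℕ) :
    (b.digits (c * b ^ k + m)).sum = (b.digits c).sum + (b.digits m).sum := by
  rcases c.eq_zero_or_pos with rfl | hc
  · simp
  have hlen : (b.digits m).length ≤ k := (Nat.digits_length_le_iff hb m).mpr hm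
  have happend := Nat.digits_append_zeroes_append_digits (k := k - (b.digits m).length)
    (n := m) hb hc
  rw [Nat.add_sub_cancel' hlen] at happend
  rw [mul_comm c, add_comm, ← happend]
  simp [add_comm]

theorem sum_digits_of_lt {d : ℕ} (hd : d < b) : (b.digits d).sum = d := by
  rcases eq_or_ne d 0 with rfl | hd0
  · simp
  · simp [Nat.digits_of_lt b d hd0 hd]

theorem sum_digits_mul_add (hb : 1 < b) {d : ℕ} (hd : d < b) (n : ℕ) :
    (b.digits (b * n + d)).sum = (b.digits n).sum + d := by
  have := sum_digits_mul_pow_add (k := 1) hb (by rwa [pow_one]) n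
  rwa [pow_one, mul_comm, sum_digits_of_lt hd] at this

theorem sum_digits_mul_pow_add_eq_sum_digits_mul_add (hb : 1 < b) {k c m : ℕ} (hc : c < b)
    (hm : m < b ^ k) : (b.digits (c * b ^ k + m)).sum = (b.digits (b * m + c)).sum := by
  rw [sum_digits_mul_pow_add hb hm, sum_digits_mul_add hb hc, sum_digits_of_lt hc, add_comm]

theorem mod_add_mod_add_one_eq_of_dvd {m n : ℕ} (hb : 0 < b) (h : b ∣ m + n + 1) :
    m % b + n % b + 1 = b := by
  have hdvd : b ∣ m % b + n % b + 1 := by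
    rw [Nat.dvd_iff_mod_eq_zero] at h ⊢
    simpa [Nat.add_mod] using h
  refine Nat.eq_of_dvd_of_lt_two_mul (by omega) hdvd ?_
  have := Nat.mod_lt m hb
  have := Nat.mod_lt n hb
  omega

theorem sum_digits_add_sum_digits_of_add_add_one_eq_pow (hb : 1 < b) {k m n : ℕ}
    (h : m + n + 1 = b ^ k) : (b.digits m).sum + (b.digits n).sum = (b - 1) * k := by
  induction k generalizing m n with
  | zero =>
    obtain ⟨rfl, rfl⟩ : m = 0 ∧ n = 0 := by simpa using h
    simp
  | succ k ih =>
    have hb0 : 0 < b := by omega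
    have hlast : m % b + n % b + 1 = b :=
      mod_add_mod_add_one_eq_of_dvd hb0 (h ▸ dvd_pow_self b k.succ_ne_zero)
    have hinit : m / b + n / b + 1 = b ^ k := by
      refine Nat.eq_of_mul_eq_mul_left hb0 ?_
      linarith [Nat.div_add_mod m b, Nat.div_add_mod n b, pow_succ' b k]
    have hm := sum_digits_mul_add hb (Nat.mod_lt m hb0) (m / b)
    have hn := sum_digits_mul_add hb (Nat.mod_lt n hb0) (n / b)
    rw [Nat.div_add_mod] at hm hn
    have := ih hinit
    rw [hm, hn, mul_add_one]
    omega

end DigitSum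

section Expansion

theorem exists_eq_div_add_int_of_den_dvd {x : ℚ} {N : ℕ} (hN : 0 < N) (hx : x.den ∣ N) :
    ∃ a < N, ∃ z : ℤ, x = a / N + z := by
  obtain ⟨m, rfl⟩ := hx
  set N := x.den * m
  have hNz : (0 : ℤ) < N := by exact_mod_cast hN
  have hxN : x * N = (x.num * m : ℤ) := by
    push_cast [N]
    rw [← mul_assoc, Rat.mul_den_eq_num]
  obtain ⟨a, ha⟩ := Int.eq_ofNat_of_zero_le (Int.emod_nonneg (x.num * m) hNz.ne')
  have haN := Int.emod_lt_of_pos (x.num * m) hNz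
  refine ⟨a, by omega, x.num * m / N, ?_⟩
  have hdivmod : (a : ℚ) + N * (x.num * m / N : ℤ) = (x.num * m : ℤ) := by
    exact_mod_cast ha ▸ Int.emod_add_mul_ediv (x.num * m) N
  field_simp
  linarith

theorem exists_eq_div_pow_sub_one_add_int {b : ℕ} (hb : 1 < b) {x : ℚ} (hx : b.Coprime x.den) :
    ∃ k a : ℕ, ∃ z : ℤ, 0 < k ∧ a < b ^ k - 1 ∧ x = a / ((b : ℚ) ^ k - 1) + z := by
  have hk : 0 < x.den.totient := Nat.totient_pos.mpr x.den_pos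
  have hpow : 1 < b ^ x.den.totient := Nat.one_lt_pow hk.ne' hb
  have hdvd : x.den ∣ b ^ x.den.totient - 1 :=
    (Nat.modEq_iff_dvd' hpow.le).mp (Nat.ModEq.pow_totient hx).symm
  obtain ⟨a, ha, z, hz⟩ := exists_eq_div_add_int_of_den_dvd (Nat.sub_pos_of_lt hpow) hdvd
  exact ⟨_, a, z, hk, ha, by simpa [Nat.cast_sub hpow.le] using hz⟩

theorem two_pow_sub_one_ne_zero {k : ℕ} (hk : 0 < k) : (2 : ℚ) ^ k - 1 ≠ 0 :=
  (sub_pos.mpr (one_lt_pow₀ one_lt_two hk.ne')).ne'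

theorem odd_den_mul {x y : ℚ} (hx : Odd x.den) (hy : Odd y.den) : Odd (x * y).den :=
  (hx.mul hy).of_dvd_nat (Rat.mul_den_dvd x y)

end Expansion

namespace IsV2

variable {V : ℚ → ℚ} {x : ℚ}

theorem apply_div_add_int (hV : IsV2 V) {k a : ℕ} (hk : 0 < k) (ha : a < 2 ^ k - 1) (z : ℤ) :
    V (a / (2 ^ k - 1) + z) = (Nat.digits 2 a).sum / k :=
  hV _ k a hk ha ⟨z, by ring⟩

theorem apply_intCast (hV : IsV2 V) (z : ℤ) : V z = 0 := by
  simpa using hV.apply_div_add_int (k := 2) (a := 0) (by norm_num) (by norm_num) z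

theorem exists_expansion (hV : IsV2 V) (hx : Odd x.den) :
    ∃ k a : ℕ, ∃ z : ℤ, 0 < k ∧ a < 2 ^ k - 1 ∧ x = a / (2 ^ k - 1) + z ∧
      V x = (Nat.digits 2 a).sum / k := by
  obtain ⟨k, a, z, hk, ha, rfl⟩ :=
    exists_eq_div_pow_sub_one_add_int one_lt_two (Nat.coprime_two_left.mpr hx)
  rw [Nat.cast_ofNat]
  exact ⟨k, a, z, hk, ha, rfl, hV.apply_div_add_int hk ha z⟩

theorem apply_eq_zero_iff (hV : IsV2 V) (hx : Odd x.den) : V x = 0 ↔ ∃ z : ℤ, x = z := by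
  refine ⟨fun h => ?_, fun ⟨z, hz⟩ => hz ▸ hV.apply_intCast z⟩
  obtain ⟨k, a, z, hk, -, rfl, hVx⟩ := hV.exists_expansion hx
  have hsum : (Nat.digits 2 a).sum = 0 := by
    rw [hVx, div_eq_zero_iff] at h
    exact_mod_cast h.resolve_right (by positivity)
  exact ⟨z, by simp [sum_digits_eq_zero_iff.mp hsum]⟩

theorem apply_add_intCast (hV : IsV2 V) (hx : Odd x.den) (n : ℤ) : V (x + n) = V x := by
  obtain ⟨k, a, z, hk, ha, rfl, hVx⟩ := hV.exists_expansion hx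
  rw [hVx, add_assoc, ← Int.cast_add, hV.apply_div_add_int hk ha]

theorem apply_two_mul (hV : IsV2 V) (hx : Odd x.den) : V (2 * x) = V x := by
  obtain ⟨_ | l, a, z, hk, ha, rfl, hVx⟩ := hV.exists_expansion hx
  · exact absurd hk (lt_irrefl 0)
  obtain ⟨c, m, hc, hm, rfl⟩ : ∃ c m, c < 2 ∧ m < 2 ^ l ∧ a = c * 2 ^ l + m :=
    ⟨a / 2 ^ l, a % 2 ^ l, Nat.div_lt_of_lt_mul (by rw [← pow_succ]; omega),
      Nat.mod_lt _ (by positivity), (Nat.div_add_mod' a (2 ^ l)).symm⟩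
  have hlt : 2 * m + c < 2 ^ (l + 1) - 1 := by
    rw [pow_succ] at ha ⊢
    interval_cases c <;> omega
  have hrotate : 2 * (((c * 2 ^ l + m : ℕ) : ℚ) / (2 ^ (l + 1) - 1) + z) =
      ((2 * m + c : ℕ) : ℚ) / (2 ^ (l + 1) - 1) + (c + 2 * z : ℤ) := by
    have := two_pow_sub_one_ne_zero hk
    field_simp
    push_cast
    ring
  rw [hVx, hrotate, hV.apply_div_add_int hk hlt,
    sum_digits_mul_pow_add_eq_sum_digits_mul_add one_lt_two hc hm]

theorem apply_two_pow_mul (hV : IsV2 V) (hx : Odd x.den) (r : ℕ) : V (2 ^ r * x) = V x := by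
  induction r with
  | zero => simp
  | succ r ih =>
    have hodd : Odd (2 ^ r * x).den := odd_den_mul (by simp) hx
    rw [pow_succ', mul_assoc, hV.apply_two_mul hodd, ih]

theorem apply_add_apply_neg (hV : IsV2 V) (hx : Odd x.den) (hx_int : ¬∃ z : ℤ, x = z) :
    V x + V (-x) = 1 := by
  obtain ⟨k, a, z, hk, ha, rfl, hVx⟩ := hV.exists_expansion hx
  have ha0 : a ≠ 0 := by
    rintro rfl
    exact hx_int ⟨z, by simp⟩
  obtain ⟨b, hab⟩ : ∃ b, a + b + 1 = 2 ^ k := ⟨2 ^ k - 1 - a, by omega⟩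
  have hcompl : -((a : ℚ) / (2 ^ k - 1) + z) = (b : ℚ) / (2 ^ k - 1) + (-1 - z : ℤ) := by
    have := two_pow_sub_one_ne_zero hk
    have : (a : ℚ) + b + 1 = 2 ^ k := by exact_mod_cast hab
    field_simp
    push_cast
    linarith
  have hsum := sum_digits_add_sum_digits_of_add_add_one_eq_pow one_lt_two hab
  rw [hVx, hcompl, hV.apply_div_add_int hk (by omega), ← add_div,
    div_eq_one_iff_eq (by positivity)]
  exact_mod_cast hsum.trans (one_mul k)

theorem apply_eq_half_of_two_pow_add_one_mul_eq_int (hV : IsV2 V) (hx : Odd x.den)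
    (hx_int : ¬∃ z : ℤ, x = z) {r : ℕ} {q : ℤ} (hq : (2 ^ r + 1) * x = q) : V x = 1 / 2 := by
  have hneg : V x = V (-x) := calc
    V x = V (2 ^ r * x) := (hV.apply_two_pow_mul hx r).symm
    _ = V (-x + q) := by rw [← hq]; ring_nf
    _ = V (-x) := hV.apply_add_intCast (by simpa using hx) q
  linarith [hV.apply_add_apply_neg hx hx_int]

end IsV2

/-- For every positive integer `r` and every rational `x` with odd denominator,
if `V((2^r + 1)x) = 0` then `V(x) = 0` or `V(x) = 1/2`. -/
theorem stmt_3 (V : ℚ → ℚ) (hV : IsV2 V) (r : ℕ) (hr : 0 < r)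
    (x : ℚ) (hx : Odd x.den) (h : V (((2 : ℚ) ^ r + 1) * x) = 0) :
    V x = 0 ∨ V x = 1 / 2 := by
  have hodd : Odd ((2 ^ r + 1) * x).den :=
    odd_den_mul (by norm_cast; exact odd_one) hx
  obtain ⟨q, hq⟩ := (hV.apply_eq_zero_iff hodd).mp h
  by_cases hx_int : ∃ z : ℤ, x = z
  · exact .inl ((hV.apply_eq_zero_iff hx).mpr hx_int)
  · exact .inr (hV.apply_eq_half_of_two_pow_add_one_mul_eq_int hx hx_int hq)
end

section
/- Let r_1 and r_2 be positive integers such that gcd(2^{r_1} + 1, 2^{r_2} + 1) = 1, and let x be a rational number with odd denominator. Then V(2; r_1, r_2; x) = V((2^{r_1}+1)(2^{r_2}+1)·x) − V((2^{r_1}+1)·x) − V((2^{r_2}+1)·x) + V(x) lies in the half-open interval [−3/4, 3/4). Moreover, V(2; r_1, r_2; x) = −3/4 if and only if (2^{r_1}+1)(2^{r_2}+1)·x is an integer and V(x) = 1/4. -/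
/-!
If `2 ^ k * y ≡ y` modulo `1`, then `V y` is the mean over `i < k` of the fractional parts
`{2 ^ i * y}`, so `V` is invariant under multiplication by `2`. Hence the second difference of `V`
is the mean over `i < k` of
`{a + b + c + d} - ({a + b} + {c + d} + {a + c} + {b + d}) / 2 + ({a} + {b} + {c} + {d}) / 4`,
where `a, b, c, d` are `2 ^ i * x` times `1`, `2 ^ r₁`, `2 ^ r₂`, `2 ^ (r₁ + r₂)`.
With `S = {a} + {b} + {c} + {d}` this equals `S / 4 - (ρ + κ) / 2`, where `ρ, κ ∈ {0, 1}` are the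
carries modulo `1` in `(a + b) + (c + d)` and `(a + c) + (b + d)`. A carry forces `1 ≤ S`, while
`ρ = 0` forces `S < 3`; this gives the bounds, with `-3/4` only if `S = 1`. Conversely, if
`y ∉ ℤ` and `(2 ^ r + 1) * y ∈ ℤ`, then `{2 ^ i * y} + {2 ^ i * (2 ^ r * y)} = 1` for all `i`, so
`V y = 1 / 2`; this applies to both `(2 ^ r₁ + 1) * x` and `(2 ^ r₂ + 1) * x` when `V x = 1 / 4`.
-/

open Finset
open scoped BigOperators

section Digits

theorem digits_sum_add_sub_one_mul_sum_div_pow {b : ℕ} (hb : 1 < b) {k a : ℕ} (ha : a < b ^ k) :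
    (Nat.digits b a).sum + (b - 1) * ∑ j ∈ range k, a / b ^ (j + 1) = a := by
  induction k generalizing a with
  | zero =>
    obtain rfl : a = 0 := by simpa using ha
    simp
  | succ k ih =>
    rcases Nat.eq_zero_or_pos a with rfl | hpos
    · simp
    have hquot := ih (Nat.div_lt_of_lt_mul (pow_succ' b k ▸ ha))
    simp only [Nat.div_div_eq_div_mul, ← pow_succ'] at hquot
    obtain ⟨c, rfl⟩ := Nat.exists_eq_add_of_lt hb
    rw [Nat.digits_def' hb hpos, List.sum_cons, sum_range_succ', zero_add, pow_one]
    have hdivmod := Nat.mod_add_div a (1 + c + 1)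
    simp only [Nat.add_sub_cancel] at hquot ⊢
    linarith

theorem mul_div_mul_sub_one {m n a : ℕ} (ha : a < m * n - 1) : m * a / (m * n - 1) = a / n := by
  have hmn : m * n - 1 + 1 = m * n := by lia
  have hn : 0 < n := Nat.pos_of_ne_zero (by rintro rfl; simp at ha)
  have hlower : a / n * n ≤ a := Nat.div_mul_le_self a n
  have hupper : a + 1 ≤ n * (a / n + 1) := Nat.lt_mul_div_succ a hn
  have hquot : a / n + 1 ≤ m := Nat.div_lt_of_lt_mul (by lia)
  refine Nat.div_eq_of_lt_le (by nlinarith) ?_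
  rcases hquot.lt_or_eq with _ | heq
  · nlinarith
  · rw [heq]
    exact Nat.mul_lt_mul_of_pos_left ha (by lia)

end Digits

section Fract

variable {R : Type*} [CommRing R] [LinearOrder R] [IsStrictOrderedRing R] [FloorRing R]

theorem fract_natCast_mul_congr (n : ℕ) {y z : R} (h : Int.fract y = Int.fract z) :
    Int.fract (n * y) = Int.fract (n * z) := by
  obtain ⟨m, hm⟩ := Int.fract_eq_fract.1 h
  exact Int.fract_eq_fract.2 ⟨n * m, by rw [← mul_sub, hm, Int.cast_mul, Int.cast_natCast]⟩

theorem fract_natCast_mul_eq_zero (n : ℕ) {y : R} (h : Int.fract y = 0) :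
    Int.fract (n * y) = 0 := by
  simpa using fract_natCast_mul_congr n (h.trans Int.fract_zero.symm)

theorem fract_mul_natCast_mul {c y : R} (h : Int.fract (c * y) = Int.fract y) (n : ℕ) :
    Int.fract (c * (n * y)) = Int.fract (n * y) := by
  rw [mul_left_comm, fract_natCast_mul_congr n h]

/-- The carry modulo `1` in the sum `p + q`; it is `0` or `1`. -/
def fractCarry (p q : R) : R :=
  Int.fract p + Int.fract q - Int.fract (p + q)

theorem fractCarry_eq_zero_or_one (p q : R) : fractCarry p q = 0 ∨ fractCarry p q = 1 := by
  obtain ⟨z, hz⟩ := Int.fract_add p q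
  have hcarry : fractCarry p q = (-z : ℤ) := by
    rw [fractCarry, Int.cast_neg, ← hz]
    ring
  have hnonneg : 0 ≤ -z := by
    have := sub_nonneg.2 (Int.fract_add_le p q)
    rwa [← fractCarry, hcarry, Int.cast_nonneg_iff] at this
  have hle : -z ≤ 1 := by
    have := sub_le_iff_le_add'.2 (Int.fract_add_fract_le p q)
    rw [← fractCarry, hcarry] at this
    exact_mod_cast this
  rw [hcarry]
  exact_mod_cast (by lia : -z = 0 ∨ -z = 1)

theorem fract_add_fract_eq_one_of_fract_add_eq_zero {p q : R} (hadd : Int.fract (p + q) = 0)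
    (hp : Int.fract p ≠ 0) : Int.fract p + Int.fract q = 1 := by
  have hpos : 0 < Int.fract p := (Int.fract_nonneg p).lt_of_ne' hp
  have hq : 0 ≤ Int.fract q := Int.fract_nonneg q
  rcases fractCarry_eq_zero_or_one p q with h | h <;> rw [fractCarry] at h <;> linarith

theorem fractCarry_add_fract_le (a b c d : R) :
    fractCarry (a + b) (c + d) + Int.fract (a + b + (c + d))
      ≤ Int.fract a + Int.fract b + Int.fract c + Int.fract d := by
  rw [fractCarry]
  linarith [Int.fract_add_le a b, Int.fract_add_le c d]

theorem fract_sum_lt_fractCarry_add_three (a b c d : R) :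
    Int.fract a + Int.fract b + Int.fract c + Int.fract d < fractCarry (a + b) (c + d) + 3 := by
  rw [fractCarry]
  linarith [Int.fract_add_fract_le a b, Int.fract_add_fract_le c d,
    Int.fract_lt_one (a + b + (c + d))]

end Fract

section GridDefect

variable {K : Type*} [Field K] [LinearOrder K] [FloorRing K]

/-- For the `2 × 2` matrix with rows `(a, b)` and `(c, d)`: the fractional part of the total, minus
half those of the row and column sums, plus a quarter of those of the entries. Its mean over an
orbit computes the second difference of `fractAverage`. -/
def gridDefect (a b c d : K) : K :=
  Int.fract (a + b + (c + d))
    - (Int.fract (a + b) + Int.fract (c + d) + Int.fract (a + c) + Int.fract (b + d)) / 2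
    + (Int.fract a + Int.fract b + Int.fract c + Int.fract d) / 4

theorem gridDefect_eq_sub_fractCarry (a b c d : K) :
    gridDefect a b c d = (Int.fract a + Int.fract b + Int.fract c + Int.fract d) / 4
      - (fractCarry (a + b) (c + d) + fractCarry (a + c) (b + d)) / 2 := by
  rw [gridDefect, fractCarry, fractCarry, add_add_add_comm a c b d]
  ring

variable [IsStrictOrderedRing K]

theorem neg_three_quarters_le_gridDefect (a b c d : K) : -(3 / 4) ≤ gridDefect a b c d := by
  have htotal := Int.fract_nonneg (a + b + (c + d))
  have hrows := fractCarry_add_fract_le a b c d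
  have hcols := fractCarry_add_fract_le a c b d
  rw [add_add_add_comm a c b d] at hcols
  rw [gridDefect_eq_sub_fractCarry]
  rcases fractCarry_eq_zero_or_one (a + b) (c + d) with hρ | hρ <;>
    rcases fractCarry_eq_zero_or_one (a + c) (b + d) with hκ | hκ <;> linarith

theorem gridDefect_lt_three_quarters (a b c d : K) : gridDefect a b c d < 3 / 4 := by
  have hrows := fract_sum_lt_fractCarry_add_three a b c d
  rw [gridDefect_eq_sub_fractCarry]
  rcases fractCarry_eq_zero_or_one (a + b) (c + d) with hρ | hρ <;>
    rcases fractCarry_eq_zero_or_one (a + c) (b + d) with hκ | hκ <;> linarith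

theorem fract_of_gridDefect_eq_neg_three_quarters {a b c d : K}
    (h : gridDefect a b c d = -(3 / 4)) :
    Int.fract (a + b + (c + d)) = 0 ∧
      Int.fract a + Int.fract b + Int.fract c + Int.fract d = 1 := by
  have htotal := Int.fract_nonneg (a + b + (c + d))
  have hrows := fractCarry_add_fract_le a b c d
  have hcols := fractCarry_add_fract_le a c b d
  rw [add_add_add_comm a c b d] at hcols
  rw [gridDefect_eq_sub_fractCarry] at h
  rcases fractCarry_eq_zero_or_one (a + b) (c + d) with hρ | hρ <;>
    rcases fractCarry_eq_zero_or_one (a + c) (b + d) with hκ | hκ <;>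
    constructor <;> linarith

end GridDefect

section FractAverage

variable {K : Type*} [Field K] [LinearOrder K] [IsStrictOrderedRing K] [FloorRing K]

/-- The mean of the fractional parts of `y, b * y, …, b ^ (k - 1) * y`. When `b ^ k * y ≡ y` modulo
`1` it is the mean over the orbit of `y` under multiplication by `b`, and for `b = 2` it is the
Kubert function `V y`. -/
def fractAverage (b k : ℕ) (y : K) : K :=
  𝔼 i ∈ range k, Int.fract (b ^ i * y)

theorem fractAverage_congr (b k : ℕ) {y z : K} (h : Int.fract y = Int.fract z) :
    fractAverage b k y = fractAverage b k z :=
  expect_congr rfl fun i _ ↦ mod_cast fract_natCast_mul_congr (b ^ i) h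

theorem fractAverage_eq_zero_of_fract_eq_zero (b k : ℕ) {y : K} (hy : Int.fract y = 0) :
    fractAverage b k y = 0 :=
  expect_eq_zero fun i _ ↦ mod_cast fract_natCast_mul_eq_zero (b ^ i) hy

theorem exists_natCast_div_eq_fract {c : ℕ} (hc : 1 < c) {y : K}
    (hy : Int.fract (c * y) = Int.fract y) :
    ∃ a < c - 1, (a : K) / (c - 1) = Int.fract y := by
  obtain ⟨z, hz⟩ := Int.fract_eq_fract.1 hy
  have hc' : (0 : K) < c - 1 := sub_pos.2 (mod_cast hc)
  have hnum : ((z - (c - 1) * ⌊y⌋ : ℤ) : K) = (c - 1) * Int.fract y := by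
    push_cast
    rw [← hz, ← Int.self_sub_floor]
    ring
  have hnonneg : 0 ≤ z - (c - 1) * ⌊y⌋ := by
    rw [← Int.cast_nonneg_iff (R := K), hnum]
    exact mul_nonneg hc'.le (Int.fract_nonneg y)
  lift z - (c - 1) * ⌊y⌋ to ℕ using hnonneg with a
  rw [Int.cast_natCast] at hnum
  refine ⟨a, ?_, by rw [hnum, mul_div_cancel_left₀ _ hc'.ne']⟩
  rw [← Nat.cast_lt (α := K), Nat.cast_pred (by lia), hnum]
  exact mul_lt_of_lt_one_right hc' (Int.fract_lt_one y)

theorem floor_pow_mul_natCast_div_pow_sub_one {b k a i : ℕ} (ha : a < b ^ k - 1) (hi : i ≤ k) :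
    ⌊(b : K) ^ i * (a / (b ^ k - 1))⌋ = (a / b ^ (k - i) : ℕ) := by
  have hpow : b ^ i * b ^ (k - i) = b ^ k := by rw [← pow_add, Nat.add_sub_cancel' hi]
  have hcast : (b : K) ^ i * (a / (b ^ k - 1)) = (b ^ i * a : ℕ) / (b ^ k - 1 : ℕ) := by
    rw [Nat.cast_sub (by lia)]
    push_cast
    rw [mul_div_assoc]
  rw [hcast, ← Int.natCast_floor_eq_floor (by positivity), Nat.floor_div_eq_div, ← hpow,
    mul_div_mul_sub_one (hpow ▸ ha)]

theorem fractAverage_natCast_div_pow_sub_one {b : ℕ} (hb : 1 < b) {k a : ℕ} (ha : a < b ^ k - 1) :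
    fractAverage b k ((a : K) / (b ^ k - 1)) = (Nat.digits b a).sum / ((b - 1) * k) := by
  have hb' : (b : K) - 1 ≠ 0 := (sub_pos.2 (mod_cast hb)).ne'
  have hbk : (b : K) ^ k - 1 ≠ 0 := (sub_pos.2 (mod_cast (by lia : 1 < b ^ k))).ne'
  have hgeom : ∑ i ∈ range k, (b : K) ^ i * (a / (b ^ k - 1)) = a / (b - 1) := by
    rw [← sum_mul, geom_sum_eq (sub_ne_zero.1 hb')]
    field_simp
  have hfloor : ∑ i ∈ range k, ⌊(b : K) ^ i * (a / (b ^ k - 1))⌋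
      = (∑ j ∈ range k, a / b ^ (j + 1) : ℕ) := by
    rw [← sum_range_reflect, Nat.cast_sum]
    refine sum_congr rfl fun i hi ↦ ?_
    have hi : i < k := mem_range.1 hi
    rw [floor_pow_mul_natCast_div_pow_sub_one ha (by lia), show k - (k - 1 - i) = i + 1 by lia]
  have hdigits : (((Nat.digits b a).sum : ℕ) : K) + (b - 1) * (∑ j ∈ range k, a / b ^ (j + 1) : ℕ)
      = a := by
    rw [← Nat.cast_pred (by lia)]
    exact_mod_cast digits_sum_add_sub_one_mul_sum_div_pow hb (by lia : a < b ^ k)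
  have hsum : ∑ i ∈ range k, Int.fract ((b : K) ^ i * (a / (b ^ k - 1)))
      = (Nat.digits b a).sum / (b - 1) := by
    simp only [← Int.self_sub_floor, sum_sub_distrib, hgeom, ← Int.cast_sum, hfloor,
      Int.cast_natCast]
    rw [eq_div_iff hb', sub_mul, div_mul_cancel₀ _ hb', ← hdigits]
    ring
  rw [fractAverage, expect_eq_sum_div_card, card_range, hsum, div_div]

theorem fractAverage_mul_base {b k : ℕ} {y : K} (hy : Int.fract (b ^ k * y) = Int.fract y) :
    fractAverage b k (b * y) = fractAverage b k y := by
  have hshift := sum_range_succ' (fun i ↦ Int.fract ((b : K) ^ i * y)) k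
  rw [sum_range_succ, hy, pow_zero, one_mul, add_left_inj] at hshift
  simp only [fractAverage, expect, hshift, pow_succ, mul_assoc]

theorem fractAverage_pow_mul {b k : ℕ} {y : K} (hy : Int.fract (b ^ k * y) = Int.fract y) (r : ℕ) :
    fractAverage b k (b ^ r * y) = fractAverage b k y := by
  induction r with
  | zero => rw [pow_zero, one_mul]
  | succ r ih =>
    have hr : Int.fract ((b : K) ^ k * (b ^ r * y)) = Int.fract (b ^ r * y) :=
      mod_cast fract_mul_natCast_mul hy (b ^ r)
    rw [pow_succ', mul_assoc, fractAverage_mul_base hr, ih]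

theorem fract_pow_mul_ne_zero {b k i : ℕ} {y : K} (hy : Int.fract (b ^ k * y) = Int.fract y)
    (hi : i ≤ k) (hne : Int.fract y ≠ 0) : Int.fract ((b : K) ^ i * y) ≠ 0 := fun hzero ↦ by
  have hpow : Int.fract ((b : K) ^ (k - i) * (b ^ i * y)) = 0 :=
    mod_cast fract_natCast_mul_eq_zero (b ^ (k - i)) (y := (b : K) ^ i * y) hzero
  rw [← mul_assoc, ← pow_add, Nat.sub_add_cancel hi, hy] at hpow
  exact hne hpow

theorem fractAverage_eq_half {b k r : ℕ} (hk : 0 < k) {y : K}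
    (hy : Int.fract (b ^ k * y) = Int.fract y) (hint : Int.fract ((b ^ r + 1) * y) = 0)
    (hne : Int.fract y ≠ 0) : fractAverage b k y = 1 / 2 := by
  have hpair : ∀ i ∈ range k,
      Int.fract ((b : K) ^ i * y) + Int.fract ((b : K) ^ i * (b ^ r * y)) = 1 := fun i hi ↦ by
    refine fract_add_fract_eq_one_of_fract_add_eq_zero ?_
      (fract_pow_mul_ne_zero hy (mem_range.1 hi).le hne)
    rw [← mul_add, ← one_add_mul, add_comm 1]
    exact_mod_cast fract_natCast_mul_eq_zero (b ^ i) hint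
  have hsum : fractAverage b k y + fractAverage b k (b ^ r * y) = 1 := by
    rw [fractAverage, fractAverage, ← expect_add_distrib, expect_congr rfl hpair,
      expect_const (nonempty_range_iff.2 hk.ne')]
  rw [fractAverage_pow_mul hy] at hsum
  linarith

end FractAverage

section SecondDifference

/-- The second difference `f (m * n * y) - f (m * y) - f (n * y) + f y` of `f` in the multiplicative
directions `m` and `n`; the paper's `V(2; r₁, r₂; x)` is the case `f = V`, `m = 2 ^ r₁ + 1`,
`n = 2 ^ r₂ + 1`. -/
def mulSecondDiff {M A : Type*} [Mul M] [AddGroup A] (f : M → A) (m n y : M) : A :=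
  f (m * n * y) - f (m * y) - f (n * y) + f y

variable {K : Type*} [Field K] [LinearOrder K] [FloorRing K]

theorem expect_gridDefect_pow_mul (b k : ℕ) (p q s t : K) :
    𝔼 i ∈ range k, gridDefect (b ^ i * p) (b ^ i * q) (b ^ i * s) (b ^ i * t) =
      fractAverage b k (p + q + (s + t))
        - (fractAverage b k (p + q) + fractAverage b k (s + t) + fractAverage b k (p + s)
          + fractAverage b k (q + t)) / 2
        + (fractAverage b k p + fractAverage b k q + fractAverage b k s + fractAverage b k t)
          / 4 := by
  simp only [gridDefect, fractAverage, ← mul_add, expect_add_distrib, expect_sub_distrib,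
    ← expect_div]

variable [IsStrictOrderedRing K] {b k : ℕ} {y : K}

theorem mulSecondDiff_fractAverage_eq_expect (hy : Int.fract (b ^ k * y) = Int.fract y)
    (r s : ℕ) :
    mulSecondDiff (fractAverage b k) ((b : K) ^ r + 1) (b ^ s + 1) y =
      𝔼 i ∈ range k, gridDefect (b ^ i * y) (b ^ i * (b ^ r * y)) (b ^ i * (b ^ s * y))
        (b ^ i * (b ^ r * (b ^ s * y))) := by
  have hmul (n : ℕ) : Int.fract ((b : K) ^ k * (n * y)) = Int.fract (n * y) :=
    fract_mul_natCast_mul hy n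
  have hs : Int.fract ((b : K) ^ k * (b ^ s * y)) = Int.fract (b ^ s * y) :=
    mod_cast hmul (b ^ s)
  have hr₁ : Int.fract ((b : K) ^ k * ((b ^ r + 1) * y)) = Int.fract ((b ^ r + 1) * y) :=
    mod_cast hmul (b ^ r + 1)
  have hs₁ : Int.fract ((b : K) ^ k * ((b ^ s + 1) * y)) = Int.fract ((b ^ s + 1) * y) :=
    mod_cast hmul (b ^ s + 1)
  have htotal : y + b ^ r * y + (b ^ s * y + b ^ r * (b ^ s * y)) =
      (b ^ r + 1) * (b ^ s + 1) * y := by ring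
  have hrow₁ : y + b ^ r * y = (b ^ r + 1) * y := by ring
  have hrow₂ : b ^ s * y + b ^ r * (b ^ s * y) = b ^ s * ((b ^ r + 1) * y) := by ring
  have hcol₁ : y + b ^ s * y = (b ^ s + 1) * y := by ring
  have hcol₂ : b ^ r * y + b ^ r * (b ^ s * y) = b ^ r * ((b ^ s + 1) * y) := by ring
  rw [expect_gridDefect_pow_mul, htotal, hrow₁, hrow₂, hcol₁, hcol₂, fractAverage_pow_mul hr₁,
    fractAverage_pow_mul hs₁, fractAverage_pow_mul hs, fractAverage_pow_mul hy,
    fractAverage_pow_mul hy, mulSecondDiff]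
  ring

theorem mulSecondDiff_fractAverage_mem_Ico (hk : 0 < k)
    (hy : Int.fract (b ^ k * y) = Int.fract y) (r s : ℕ) :
    mulSecondDiff (fractAverage b k) ((b : K) ^ r + 1) (b ^ s + 1) y
      ∈ Set.Ico (-(3 / 4)) (3 / 4) := by
  rw [mulSecondDiff_fractAverage_eq_expect hy]
  exact ⟨le_expect (nonempty_range_iff.2 hk.ne') fun _ _ ↦ neg_three_quarters_le_gridDefect ..,
    expect_lt (fun _ _ ↦ (gridDefect_lt_three_quarters ..).le)
      ⟨0, mem_range.2 hk, gridDefect_lt_three_quarters ..⟩⟩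

theorem fract_eq_zero_of_mulSecondDiff_fractAverage_eq (hk : 0 < k)
    (hy : Int.fract (b ^ k * y) = Int.fract y) {r s : ℕ}
    (hmin : mulSecondDiff (fractAverage b k) ((b : K) ^ r + 1) (b ^ s + 1) y = -(3 / 4)) :
    Int.fract (((b : K) ^ r + 1) * (b ^ s + 1) * y) = 0 ∧ fractAverage b k y = 1 / 4 := by
  rw [mulSecondDiff_fractAverage_eq_expect hy] at hmin
  have hterm := fun i hi ↦ fract_of_gridDefect_eq_neg_three_quarters <|
    by_contra fun hne ↦ hmin.not_gt <|
      lt_expect (fun _ _ ↦ neg_three_quarters_le_gridDefect ..)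
        ⟨i, hi, (neg_three_quarters_le_gridDefect ..).lt_of_ne' hne⟩
  constructor
  · convert (hterm 0 (mem_range.2 hk)).1 using 2
    ring
  · have hs : Int.fract ((b : K) ^ k * (b ^ s * y)) = Int.fract (b ^ s * y) :=
      mod_cast fract_mul_natCast_mul hy (b ^ s)
    have hsum : fractAverage b k y + fractAverage b k (b ^ r * y) + fractAverage b k (b ^ s * y)
        + fractAverage b k (b ^ r * (b ^ s * y)) = 1 := by
      simp only [fractAverage, ← expect_add_distrib]
      rw [expect_congr rfl fun i hi ↦ (hterm i hi).2, expect_const (nonempty_range_iff.2 hk.ne')]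
    rw [fractAverage_pow_mul hs, fractAverage_pow_mul hy, fractAverage_pow_mul hy] at hsum
    linarith

theorem mulSecondDiff_fractAverage_eq_of_fract_eq_zero (hk : 0 < k)
    (hy : Int.fract (b ^ k * y) = Int.fract y) {r s : ℕ}
    (hint : Int.fract (((b : K) ^ r + 1) * (b ^ s + 1) * y) = 0)
    (hquarter : fractAverage b k y = 1 / 4) :
    mulSecondDiff (fractAverage b k) ((b : K) ^ r + 1) (b ^ s + 1) y = -(3 / 4) := by
  have hy₀ : Int.fract y ≠ 0 := fun h ↦ by
    have := fractAverage_eq_zero_of_fract_eq_zero b k h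
    linarith
  have hmul₀ (n : ℕ) : Int.fract (((b : K) ^ n + 1) * y) ≠ 0 := fun h ↦ by
    have := fractAverage_eq_half hk hy h hy₀
    linarith
  have hmul (n : ℕ) : Int.fract ((b : K) ^ k * ((b ^ n + 1) * y)) = Int.fract ((b ^ n + 1) * y) :=
    mod_cast fract_mul_natCast_mul hy (b ^ n + 1)
  have hr : fractAverage b k (((b : K) ^ r + 1) * y) = 1 / 2 :=
    fractAverage_eq_half (r := s) hk (hmul r) (by rw [← hint]; ring_nf) (hmul₀ r)
  have hs : fractAverage b k (((b : K) ^ s + 1) * y) = 1 / 2 :=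
    fractAverage_eq_half (r := r) hk (hmul s) (by rw [← hint]; ring_nf) (hmul₀ s)
  rw [mulSecondDiff, fractAverage_eq_zero_of_fract_eq_zero b k hint, hr, hs, hquarter]
  norm_num

end SecondDifference

theorem exists_pos_fract_pow_mul_eq {b : ℕ} {x : ℚ} (hx : b.Coprime x.den) :
    ∃ k, 0 < k ∧ Int.fract ((b : ℚ) ^ k * x) = Int.fract x := by
  refine ⟨x.den.totient, Nat.totient_pos.2 x.den_pos, Int.fract_eq_fract.2 ?_⟩
  obtain ⟨c, hc⟩ := Nat.modEq_iff_dvd.1 (Nat.ModEq.pow_totient hx).symm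
  have hpow : (b : ℚ) ^ x.den.totient - 1 = x.den * c := mod_cast hc
  exact ⟨x.num * c, by rw [← sub_one_mul, hpow, Int.cast_mul, ← Rat.mul_den_eq_num]; ring⟩

theorem IsV2.eq_fractAverage {V : ℚ → ℚ} (hV : IsV2 V) {k : ℕ} (hk : 0 < k) {y : ℚ}
    (hy : Int.fract (2 ^ k * y) = Int.fract y) : V y = fractAverage 2 k y := by
  obtain ⟨a, ha, hdiv⟩ := exists_natCast_div_eq_fract (Nat.one_lt_two_pow hk.ne') (mod_cast hy)
  push_cast at hdiv
  have havg : fractAverage 2 k ((a : ℚ) / (2 ^ k - 1)) = (Nat.digits 2 a).sum / k := by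
    convert fractAverage_natCast_div_pow_sub_one (K := ℚ) one_lt_two ha using 1 <;> norm_num
  rw [hV y k a hk ha ⟨⌊y⌋, by rw [hdiv, Int.self_sub_fract]⟩, ← havg, hdiv,
    fractAverage_congr 2 k (Int.fract_fract y)]

theorem IsV2.mulSecondDiff_eq {V : ℚ → ℚ} (hV : IsV2 V) {k : ℕ} (hk : 0 < k) {y : ℚ}
    (hy : Int.fract (2 ^ k * y) = Int.fract y) (m n : ℕ) :
    mulSecondDiff V (m : ℚ) n y = mulSecondDiff (fractAverage 2 k) (m : ℚ) n y := by
  have hmul (l : ℕ) : V (l * y) = fractAverage 2 k (l * y) :=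
    hV.eq_fractAverage hk (fract_mul_natCast_mul hy l)
  rw [mulSecondDiff, mulSecondDiff, ← Nat.cast_mul, hmul, hmul, hmul, hV.eq_fractAverage hk hy]

theorem stmt_5_general (V : ℚ → ℚ) (hV : IsV2 V) (r₁ r₂ : ℕ) (x : ℚ) (hx : Odd x.den) :
    V (((2 : ℚ) ^ r₁ + 1) * ((2 : ℚ) ^ r₂ + 1) * x) - V (((2 : ℚ) ^ r₁ + 1) * x)
        - V (((2 : ℚ) ^ r₂ + 1) * x) + V x ∈ Set.Ico (-(3 / 4) : ℚ) (3 / 4) ∧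
      (V (((2 : ℚ) ^ r₁ + 1) * ((2 : ℚ) ^ r₂ + 1) * x) - V (((2 : ℚ) ^ r₁ + 1) * x)
          - V (((2 : ℚ) ^ r₂ + 1) * x) + V x = -(3 / 4) ↔
        (∃ z : ℤ, ((2 : ℚ) ^ r₁ + 1) * ((2 : ℚ) ^ r₂ + 1) * x = (z : ℚ)) ∧ V x = 1 / 4) := by
  obtain ⟨k, hk, hper⟩ := exists_pos_fract_pow_mul_eq (Nat.coprime_two_left.2 hx)
  have hdiff : mulSecondDiff V ((2 : ℚ) ^ r₁ + 1) (2 ^ r₂ + 1) x =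
      mulSecondDiff (fractAverage 2 k) ((2 : ℚ) ^ r₁ + 1) (2 ^ r₂ + 1) x :=
    mod_cast hV.mulSecondDiff_eq hk hper (2 ^ r₁ + 1) (2 ^ r₂ + 1)
  have hint : (∃ z : ℤ, ((2 : ℚ) ^ r₁ + 1) * (2 ^ r₂ + 1) * x = z) ↔
      Int.fract (((2 : ℚ) ^ r₁ + 1) * (2 ^ r₂ + 1) * x) = 0 :=
    (exists_congr fun _ ↦ eq_comm).trans Int.fract_eq_zero_iff.symm
  change mulSecondDiff V _ _ x ∈ _ ∧ (mulSecondDiff V _ _ x = _ ↔ _)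
  rw [hdiff, hint, hV.eq_fractAverage hk hper]
  exact ⟨mulSecondDiff_fractAverage_mem_Ico hk hper r₁ r₂,
    fract_eq_zero_of_mulSecondDiff_fractAverage_eq hk hper,
    fun ⟨hzero, hquarter⟩ ↦ mulSecondDiff_fractAverage_eq_of_fract_eq_zero hk hper hzero hquarter⟩

/-- Let `r₁, r₂` be positive integers with `gcd(2^{r₁}+1, 2^{r₂}+1) = 1` and `x` a rational
with odd denominator. Then
`V(2; r₁, r₂; x) = V((2^{r₁}+1)(2^{r₂}+1)x) - V((2^{r₁}+1)x) - V((2^{r₂}+1)x) + V(x)`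
lies in `[-3/4, 3/4)`, with value `-3/4` iff `(2^{r₁}+1)(2^{r₂}+1)x ∈ ℤ` and `V(x) = 1/4`. -/
theorem stmt_5 (V : ℚ → ℚ) (hV : IsV2 V) (r₁ r₂ : ℕ) (hr₁ : 0 < r₁) (hr₂ : 0 < r₂)
    (hcop : Nat.Coprime (2 ^ r₁ + 1) (2 ^ r₂ + 1))
    (x : ℚ) (hx : Odd x.den) :
    V (((2 : ℚ) ^ r₁ + 1) * ((2 : ℚ) ^ r₂ + 1) * x) - V (((2 : ℚ) ^ r₁ + 1) * x)
        - V (((2 : ℚ) ^ r₂ + 1) * x) + V x ∈ Set.Ico (-(3 / 4) : ℚ) (3 / 4) ∧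
      (V (((2 : ℚ) ^ r₁ + 1) * ((2 : ℚ) ^ r₂ + 1) * x) - V (((2 : ℚ) ^ r₁ + 1) * x)
          - V (((2 : ℚ) ^ r₂ + 1) * x) + V x = -(3 / 4) ↔
        (∃ z : ℤ, ((2 : ℚ) ^ r₁ + 1) * ((2 : ℚ) ^ r₂ + 1) * x = (z : ℚ)) ∧ V x = 1 / 4) :=
  stmt_5_general V hV r₁ r₂ x hx
end

section
/- Let t ≥ 2 and let a_1, …, a_t be positive integers such that the numbers 2^{a_1}+1, …, 2^{a_t}+1 are pairwise coprime. Then at least one of the following holds: (i) there exist integers i_1, …, i_t such that for every j the number i_j is not divisible by 2^{a_j}+1, and V(2; a_1, …, a_t; ∑_{j=1}^t i_j/(2^{a_j}+1)) ≠ −1/2; or (ii) there exist an index j_0 ∈ {1, …, t} and integers i_1, …, i_t such that 2^{a_{j_0}}+1 divides i_{j_0} and V(2; a_1, …, a_t; ∑_{j=1}^t i_j/(2^{a_j}+1)) does not lie in the interval [−1/2, 1/2]. -/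
/-- `Vmulti V r x = V(2; r₁, …, r_t; x) = ∑_{S ⊆ {1,…,t}} (-1)^{t - |S|} V((∏_{j ∈ S} (2^{r_j}+1)) x)`. -/
def Vmulti (V : ℚ → ℚ) {t : ℕ} (r : Fin t → ℕ) (x : ℚ) : ℚ :=
  ∑ S : Finset (Fin t), (-1 : ℚ) ^ (t - S.card) * V ((∏ j ∈ S, ((2 : ℚ) ^ (r j) + 1)) * x)

/-!
Away from the integers `V x = 1/2 + W x / K`, where `W x = ∑_{i < K} ((2^i x))` sums the sawtooth
function over the doubling orbit of `x` and `K` is a period of that orbit. The function `W` is odd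
and, like the sawtooth function, satisfies the distribution relations of all odd levels.

At a generic point `x = ∑ i_j / n_j`, where `n_j = 2^{a_j} + 1 ∤ i_j`, the only integer among the
points `(∏_{j ∈ S} n_j) x` is the one with `S` full. Hence `V(2; a; x) = -1/2 ± H x / K` with `H`
the alternating sum of the values of `W` at these points, and it suffices that `H` does not vanish
at all generic points. Suppose it does. Let `G` be the analogous sum without the index `j`, so that
`H x = G x - G (n_j x)`. Summing over the `j`-th coordinate and applying the distribution relation
gives `G x = (2 - n_j) G (n_j x)` for `x` generic without the index `j`. Since `x ↦ n_j x` has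
finite order modulo `1` and `|2 - n_j| > 1` if `n_j ≠ 3`, also `G` vanishes. In this way all
indices but two, `p` and `q`, are removed.

For two indices `H = W`, because `2^{a_p}` acts as `-1` on the fractions with denominator `n_p`, on
which the odd function `W` is therefore `0`. So `V x = 1/2` at all `x = i / n_p + j / n_q`. But
`V (1 / (2^g + 1) + 1 / (2^k + 1)) < 1/2` when `2g ∣ k`: adding `1 / (2^k + 1)` to
`1 / (2^g + 1) = A / (2^k - 1)` replaces the digit block `A A` by `A + 1` followed by `A - 1`, which
lowers the digit sum as `A` is odd.
-/

open Finset Function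

/-- The subring `ℤ` of `ℚ`, in which the congruences modulo `1` of the argument are expressed. -/
abbrev intSubring : Subring ℚ := (Int.castRingHom ℚ).range

lemma notMem_intSubring_iff {x : ℚ} : x ∉ intSubring ↔ Int.fract x ≠ 0 := by
  rw [ne_eq, Int.fract_eq_zero_iff]
  rfl

lemma periodic_add_of_mem {E : Type*} {f : ℚ → E} (hf : Periodic f 1) (x : ℚ) {z : ℚ}
    (hz : z ∈ intSubring) : f (x + z) = f x := by
  obtain ⟨z, rfl⟩ := hz
  simpa using hf.int_mul z x

section Digits

lemma sum_digits_base_pow_mul_add {b k n : ℕ} (hb : 1 < b) (m : ℕ) (hn : n < b ^ k) :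
    (b.digits (b ^ k * m + n)).sum = (b.digits m).sum + (b.digits n).sum := by
  obtain rfl | hm := m.eq_zero_or_pos
  · simp
  obtain ⟨l, hl⟩ := exists_add_of_le ((Nat.digits_length_le_iff hb n).2 hn)
  rw [hl, add_comm, ← Nat.digits_append_zeroes_append_digits hb hm]
  simp [add_comm]

lemma sum_digits_two_mul (n : ℕ) : (Nat.digits 2 (2 * n)).sum = (Nat.digits 2 n).sum := by
  simpa using sum_digits_base_pow_mul_add (k := 1) one_lt_two n (n := 0) two_pos

lemma sum_digits_two_mul_add_one (n : ℕ) :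
    (Nat.digits 2 (2 * n + 1)).sum = (Nat.digits 2 n).sum + 1 := by
  simpa using sum_digits_base_pow_mul_add (k := 1) one_lt_two n (n := 1) one_lt_two

lemma sum_digits_two_succ_le (n : ℕ) :
    (Nat.digits 2 (n + 1)).sum ≤ (Nat.digits 2 n).sum + 1 := by
  induction n using Nat.strong_induction_on with
  | h n ih =>
    obtain ⟨c, rfl | rfl⟩ := n.even_or_odd'
    · rw [sum_digits_two_mul_add_one, sum_digits_two_mul]
    · rw [show 2 * c + 1 + 1 = 2 * (c + 1) by ring, sum_digits_two_mul, sum_digits_two_mul_add_one]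
      have := ih c (by lia)
      lia

lemma sum_digits_succ_add_sum_digits_pred_lt {n : ℕ} (hn : Odd n) :
    (Nat.digits 2 (n + 1)).sum + (Nat.digits 2 (n - 1)).sum < 2 * (Nat.digits 2 n).sum := by
  obtain ⟨c, rfl⟩ := hn
  rw [show 2 * c + 1 + 1 = 2 * (c + 1) by ring, Nat.add_sub_cancel, sum_digits_two_mul,
    sum_digits_two_mul, sum_digits_two_mul_add_one]
  have := sum_digits_two_succ_le c
  lia

lemma sum_digits_add_sum_div_pow {b k n : ℕ} (hb : 1 < b) (hn : n < b ^ k) :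
    (b.digits n).sum + (b - 1) * ∑ i ∈ range k, n / b ^ (i + 1) = n := by
  obtain rfl | hn0 := eq_or_ne n 0
  · simp
  have hlog : ∑ i ∈ range (Nat.log b n).succ, n / b ^ (i + 1) = ∑ i ∈ range k, n / b ^ (i + 1) := by
    refine sum_subset (range_subset_range.2 (Nat.log_lt_of_lt_pow hn0 hn)) fun i _ hi => ?_
    exact Nat.div_eq_of_lt (Nat.lt_pow_of_log_lt hb (by grind))
  rw [← hlog, Nat.sub_one_mul_sum_log_div_pow_eq_sub_sum_digits,
    Nat.add_sub_cancel' (Nat.digit_sum_le b n)]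

lemma floor_two_pow_mul_div {K a i : ℕ} (ha : a < 2 ^ K - 1) (hi : i ≤ K) :
    ⌊(2 : ℚ) ^ i * (a / (2 ^ K - 1))⌋ = (a / 2 ^ (K - i) : ℕ) := by
  have ha' : (a : ℚ) < 2 ^ K - 1 := by
    have : a + 1 < 2 ^ K := by lia
    exact lt_sub_iff_add_lt.2 (mod_cast this)
  have hpos : (0 : ℚ) < 2 ^ K - 1 := a.cast_nonneg.trans_lt ha'
  set x : ℚ := a / (2 ^ K - 1) with hx
  have hfloor : ⌊x⌋ = 0 := Int.floor_eq_zero_iff.2 ⟨by positivity, (div_lt_one hpos).2 ha'⟩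
  have hshift : (2 : ℚ) ^ i * x = (a + x) / (2 ^ (K - i) : ℕ) := by
    have hK : (2 : ℚ) ^ K = 2 ^ i * 2 ^ (K - i) := by rw [← pow_add, Nat.add_sub_cancel' hi]
    have : a + x = 2 ^ K * x := by rw [hx]; field_simp; ring
    rw [this, hK]
    push_cast
    field_simp
  rw [hshift, Int.floor_div_natCast, Int.floor_natCast_add, hfloor, add_zero]
  norm_cast

lemma sum_fract_two_pow_mul_div {K a : ℕ} (ha : a < 2 ^ K - 1) :
    ∑ i ∈ range K, Int.fract ((2 : ℚ) ^ i * (a / (2 ^ K - 1))) = (Nat.digits 2 a).sum := by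
  have hK : K ≠ 0 := by rintro rfl; simp at ha
  have hpos : (2 : ℚ) ^ K - 1 ≠ 0 := (sub_pos.2 (one_lt_pow₀ one_lt_two hK)).ne'
  have hfloor : ∑ i ∈ range K, ⌊(2 : ℚ) ^ i * (a / (2 ^ K - 1))⌋
      = (∑ i ∈ range K, a / 2 ^ (i + 1) : ℕ) := by
    rw [← sum_range_reflect, Nat.cast_sum]
    refine sum_congr rfl fun i hi => ?_
    have hi := mem_range.1 hi
    rw [floor_two_pow_mul_div ha (by lia), show K - (K - 1 - i) = i + 1 by lia]
  have hdigits : (Nat.digits 2 a).sum + ∑ i ∈ range K, a / 2 ^ (i + 1) = a := by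
    simpa using sum_digits_add_sum_div_pow one_lt_two (show a < 2 ^ K by lia)
  have hgeom : (∑ i ∈ range K, (2 : ℚ) ^ i) * (a / (2 ^ K - 1)) = a := by
    rw [geom_sum_eq (by norm_num)]
    field_simp
    norm_num
  simp only [Int.fract, sum_sub_distrib, ← sum_mul, ← Int.cast_sum, hfloor, hgeom, Int.cast_natCast]
  rw [sub_eq_iff_eq_add]
  exact_mod_cast hdigits.symm

end Digits

section Distribution

/-- `f` is a Kubert distribution at level `m`: a `1`-periodic function on `ℚ`, hence a function on
`ℚ/ℤ`, whose sum over the `m`-division points of any point `m * x` is its value there. -/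
structure IsDistribution {E : Type*} [AddCommMonoid E] (m : ℕ) (f : ℚ → E) : Prop where
  periodic : Periodic f 1
  sum_add_div : ∀ x, ∑ l ∈ range m, f (x + l / m) = f (m * x)

lemma sum_range_comp_mul_of_periodic {E : Type*} [AddCommMonoid E] {m u : ℕ} {f : ℕ → E}
    (hf : Periodic f m) (hu : u.Coprime m) : ∑ l ∈ range m, f (u * l) = ∑ l ∈ range m, f l := by
  have maps : Set.MapsTo (fun l => u * l % m) (range m) (range m) := fun l hl =>
    mem_coe.2 (mem_range.2 (Nat.mod_lt _ (pos_of_gt (mem_range.1 hl))))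
  have inj : Set.InjOn (fun l => u * l % m) (range m) := fun k hk l hl hkl =>
    (Nat.ModEq.cancel_left_of_coprime hu.symm hkl).eq_of_lt_of_lt (mem_range.1 hk) (mem_range.1 hl)
  exact sum_nbij (fun l => u * l % m) maps inj (surjOn_of_injOn_of_card_le _ maps inj le_rfl)
    fun l _ => (hf.map_mod_nat _).symm

namespace IsDistribution

variable {E ι : Type*} [AddCommGroup E] {m : ℕ} {f : ℚ → E}

lemma comp_mul (hf : IsDistribution m f) {u : ℕ} (hu : u.Coprime m) :
    IsDistribution m fun x => f (u * x) where
  periodic x := by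
    simpa [mul_add] using hf.periodic.nat_mul u (u * x)
  sum_add_div x := by
    have hper : Periodic (fun l : ℕ => f (u * x + l / m)) m := fun l => by
      obtain rfl | hm := eq_or_ne m 0
      · simp
      have : ((l + m : ℕ) : ℚ) / m = l / m + 1 := by push_cast; field_simp
      simp only [this, ← add_assoc, hf.periodic _]
    calc ∑ l ∈ range m, f (u * (x + l / m))
        = ∑ l ∈ range m, f (u * x + (u * l : ℕ) / m) :=
          sum_congr rfl fun l _ => by push_cast; ring_nf
      _ = ∑ l ∈ range m, f (u * x + l / m) := sum_range_comp_mul_of_periodic hper hu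
      _ = f (u * (m * x)) := by rw [hf.sum_add_div, mul_left_comm]

lemma zsmul (hf : IsDistribution m f) (c : ℤ) : IsDistribution m fun x => c • f x where
  periodic x := by simp only [hf.periodic x]
  sum_add_div x := by rw [← smul_sum, hf.sum_add_div]

lemma sum {s : Finset ι} {f : ι → ℚ → E} (hf : ∀ i ∈ s, IsDistribution m (f i)) :
    IsDistribution m fun x => ∑ i ∈ s, f i x where
  periodic x := sum_congr rfl fun i hi => (hf i hi).periodic x
  sum_add_div x := by
    rw [sum_comm]
    exact sum_congr rfl fun i hi => (hf i hi).sum_add_div x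

end IsDistribution

end Distribution

section Sawtooth

/-- The sawtooth function `((x))`: it is `{x} - 1/2` off the integers and, both fractional parts
being `0` there, vanishes at the integers. -/
def sawtooth (x : ℚ) : ℚ := (Int.fract x - Int.fract (-x)) / 2

lemma sawtooth_neg (x : ℚ) : sawtooth (-x) = -sawtooth x := by
  rw [sawtooth, sawtooth, neg_neg]
  ring

lemma sawtooth_periodic : Periodic sawtooth 1 := fun x => by
  rw [sawtooth, Int.fract_add_one, neg_add, ← sub_eq_add_neg, Int.fract_sub_one, sawtooth]

lemma sawtooth_of_notMem {x : ℚ} (hx : x ∉ intSubring) : sawtooth x = Int.fract x - 1 / 2 := by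
  rw [sawtooth, Int.fract_neg (notMem_intSubring_iff.1 hx)]
  ring

lemma sawtooth_of_mem_Ioo {x : ℚ} (hx : x ∈ Set.Ioo 0 1) : sawtooth x = x - 1 / 2 := by
  have hfract : Int.fract x = x := Int.fract_eq_self.2 ⟨hx.1.le, hx.2⟩
  rw [sawtooth_of_notMem (notMem_intSubring_iff.2 (hfract.trans_ne hx.1.ne')), hfract]

lemma sum_sawtooth_of_mem_Ico {m : ℕ} {x : ℚ} (hx : x ∈ Set.Ico 0 (1 / m : ℚ)) :
    ∑ l ∈ range m, sawtooth (x + l / m) = sawtooth (m * x) := by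
  obtain _ | k := m
  · simp [sawtooth]
  obtain ⟨hx0, hx1⟩ := hx
  rw [lt_div_iff₀ (by positivity)] at hx1
  push_cast at hx1 ⊢
  have hterm : ∀ l ∈ range k, sawtooth (x + (l + 1) / (k + 1)) = x + (l + 1) / (k + 1) - 1 / 2 := by
    intro l hl
    have hl : (l : ℚ) + 1 ≤ k := mod_cast mem_range.1 hl
    refine sawtooth_of_mem_Ioo ⟨by positivity, ?_⟩
    calc x + (l + 1) / (k + 1) = (x * (k + 1) + (l + 1)) / (k + 1) := by field_simp
      _ < 1 := (div_lt_one (by positivity)).2 (by linarith)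
  have hsum : ∑ l ∈ range k, (x + (l + 1) / (k + 1) - 1 / 2) = k * x := by
    have hgauss : ∑ l ∈ range k, ((l : ℚ) + 1) = k * (k + 1) / 2 := by
      have := sum_range_id_mul_two (k + 1)
      rw [sum_range_succ', Nat.add_sub_cancel, add_zero, mul_comm (k + 1)] at this
      rw [eq_div_iff two_ne_zero]
      exact_mod_cast this
    rw [sum_sub_distrib, sum_add_distrib, ← sum_div, hgauss]
    simp only [sum_const, card_range, nsmul_eq_mul]
    field_simp
    ring
  have hzero : sawtooth ((k + 1) * x) - sawtooth x = k * x := by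
    obtain rfl | hpos := hx0.eq_or_lt
    · simp
    rw [sawtooth_of_mem_Ioo ⟨by positivity, by linarith⟩,
      sawtooth_of_mem_Ioo ⟨hpos, by nlinarith [k.cast_nonneg (α := ℚ)]⟩]
    ring
  rw [sum_range_succ']
  push_cast
  rw [sum_congr rfl hterm, hsum, zero_div, add_zero]
  linarith

lemma isDistribution_sawtooth {m : ℕ} (hm : m ≠ 0) : IsDistribution m sawtooth where
  periodic := sawtooth_periodic
  sum_add_div x := by
    -- The defect of the relation is `1/m`-periodic, so it is enough to look at `[0, 1/m)`.
    have hper : Periodic (fun x => ∑ l ∈ range m, sawtooth (x + l / m) - sawtooth (m * x))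
        (1 / m : ℚ) := fun x => by
      have hshift := (sum_range_succ (fun l : ℕ => sawtooth (x + l / m)) m).symm.trans
        (sum_range_succ' _ _)
      have hcongr : ∀ l : ℕ, x + 1 / m + l / m = x + (l + 1 : ℕ) / m := fun l => by
        push_cast; ring
      have hmul : (m : ℚ) * (x + 1 / m) = m * x + 1 := by field_simp
      simp only [hcongr, hmul, sawtooth_periodic (m * x)]
      rw [div_self (by positivity), sawtooth_periodic, Nat.cast_zero, zero_div, add_zero] at hshift
      linarith
    obtain ⟨y, hy, hxy⟩ := hper.exists_mem_Ico₀ (by positivity) x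
    rw [← sub_eq_zero, hxy, sum_sawtooth_of_mem_Ico hy, sub_self]

end Sawtooth

section SawtoothSum

/-- The sum of the sawtooth function over the first `K` points of the orbit of `x` under doubling.
At a point whose
orbit has period `K` it is `K` times the odd part of the function `V`. -/
def sawtoothSum (K : ℕ) (x : ℚ) : ℚ := ∑ i ∈ range K, sawtooth (2 ^ i * x)

variable {K r : ℕ} {x : ℚ}

lemma isDistribution_sawtoothSum (K : ℕ) {m : ℕ} (hm : Odd m) :
    IsDistribution m (sawtoothSum K) := by
  have hterm (i : ℕ) : IsDistribution m fun x => sawtooth ((2 ^ i : ℕ) * x) :=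
    (isDistribution_sawtooth hm.pos.ne').comp_mul ((Nat.coprime_two_left.2 hm).pow_left i)
  push_cast at hterm
  exact IsDistribution.sum fun i _ => hterm i

lemma sawtoothSum_neg (K : ℕ) (x : ℚ) : sawtoothSum K (-x) = -sawtoothSum K x := by
  simp only [sawtoothSum, mul_neg, sawtooth_neg, sum_neg_distrib]

lemma sawtoothSum_of_mem (K : ℕ) (hx : x ∈ intSubring) : sawtoothSum K x = 0 := by
  have hper : Periodic (sawtoothSum K) 1 := (isDistribution_sawtoothSum K odd_one).periodic
  rw [← zero_add x, periodic_add_of_mem hper 0 hx]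
  simp [sawtoothSum, sawtooth]

lemma sawtoothSum_two_mul (hx : (2 ^ K - 1) * x ∈ intSubring) :
    sawtoothSum K (2 * x) = sawtoothSum K x := by
  have hlast : sawtooth (2 ^ K * x) = sawtooth (2 ^ 0 * x) := by
    rw [← periodic_add_of_mem sawtooth_periodic (2 ^ 0 * x) hx]
    ring_nf
  simp only [sawtoothSum, ← mul_assoc, ← pow_succ]
  rw [← add_left_inj, ← sum_range_succ' (fun i => sawtooth (2 ^ i * x)), sum_range_succ, hlast]

lemma sawtoothSum_two_pow_mul (hx : (2 ^ K - 1) * x ∈ intSubring) (i : ℕ) :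
    sawtoothSum K (2 ^ i * x) = sawtoothSum K x := by
  induction i with
  | zero => simp
  | succ i ih =>
    have hmem : (2 ^ K - 1) * (2 ^ i * x) ∈ intSubring := by
      rw [mul_left_comm]
      exact mul_mem (pow_mem (ofNat_mem _ 2) i) hx
    rw [pow_succ', mul_assoc, sawtoothSum_two_mul hmem, ih]

lemma two_pow_add_one_dvd_two_pow_sub_one (hK : 2 * r ∣ K) : 2 ^ r + 1 ∣ 2 ^ K - 1 := by
  have hsq : 2 ^ (2 * r) - 1 = (2 ^ r + 1) * (2 ^ r - 1) := by
    rw [mul_comm 2 r, pow_mul, ← Nat.sq_sub_sq, one_pow]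
  exact (Dvd.intro _ hsq.symm).trans (Nat.pow_sub_one_dvd_pow_sub_one 2 hK)

lemma two_pow_sub_one_mul_mem (hK : 2 * r ∣ K) (hx : (2 ^ r + 1) * x ∈ intSubring) :
    (2 ^ K - 1) * x ∈ intSubring := by
  obtain ⟨c, hc⟩ := two_pow_add_one_dvd_two_pow_sub_one hK
  have hc' : (2 ^ K - 1 : ℚ) = (2 ^ r + 1) * c := by
    rw [sub_eq_iff_eq_add]
    exact_mod_cast (Nat.sub_eq_iff_eq_add Nat.one_le_two_pow).1 hc
  rw [hc', mul_right_comm]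
  exact mul_mem hx (natCast_mem _ c)

/-- Multiplication by `2 ^ r` acts on such an `x` as `-1`, and the sum is odd. -/
lemma sawtoothSum_eq_zero (hK : 2 * r ∣ K) (hx : (2 ^ r + 1) * x ∈ intSubring) :
    sawtoothSum K x = 0 := by
  have hper : Periodic (sawtoothSum K) 1 := (isDistribution_sawtoothSum K odd_one).periodic
  have hanti : sawtoothSum K x = -sawtoothSum K x := calc
    sawtoothSum K x = sawtoothSum K (2 ^ r * x) :=
      (sawtoothSum_two_pow_mul (two_pow_sub_one_mul_mem hK hx) r).symm
    _ = sawtoothSum K (-x + (2 ^ r + 1) * x) := by ring_nf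
    _ = -sawtoothSum K x := by rw [periodic_add_of_mem hper _ hx, sawtoothSum_neg]
  linarith

end SawtoothSum

namespace IsV2

variable {V : ℚ → ℚ} {K r : ℕ} {x : ℚ}

lemma eq_sum_fract (hV : IsV2 V) (hK : 0 < K) (hx : (2 ^ K - 1) * x ∈ intSubring) :
    V x = (∑ i ∈ range K, Int.fract (2 ^ i * x)) / K := by
  obtain ⟨z, hz : (z : ℚ) = (2 ^ K - 1) * x⟩ := hx
  have hpos : 0 < (2 : ℤ) ^ K - 1 := sub_pos.2 (one_lt_pow₀ one_lt_two hK.ne')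
  obtain ⟨a, ha⟩ := Int.eq_ofNat_of_zero_le (z.emod_nonneg hpos.ne')
  have ha_lt : a < 2 ^ K - 1 := by
    have := ha ▸ z.emod_lt_of_pos hpos
    have : a + 1 < 2 ^ K := by zify; lia
    lia
  have hx : x - a / (2 ^ K - 1) = (z / (2 ^ K - 1) : ℤ) := by
    have hpos' : (0 : ℚ) < 2 ^ K - 1 := mod_cast hpos
    have hdiv : (2 ^ K - 1 : ℚ) * (z / (2 ^ K - 1) : ℤ) + a = z := by
      exact_mod_cast ha ▸ z.mul_ediv_add_emod (2 ^ K - 1)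
    field_simp
    linarith
  rw [hV x K a hK ha_lt ⟨_, hx⟩, ← sum_fract_two_pow_mul_div ha_lt]
  congr 1
  refine sum_congr rfl fun i _ => Int.fract_eq_fract.2 ⟨-(2 ^ i * (z / (2 ^ K - 1))), ?_⟩
  rw [← mul_sub, ← neg_sub x, hx, mul_neg]
  norm_cast

lemma eq_zero_of_mem (hV : IsV2 V) (hx : x ∈ intSubring) : V x = 0 := by
  obtain ⟨z, hz : (z : ℚ) = x⟩ := hx
  simpa using hV x 1 0 one_pos (by norm_num) ⟨z, by simp [hz]⟩

lemma eq_sawtoothSum_div_add_half (hV : IsV2 V) (hK : 0 < K) (hx : (2 ^ K - 1) * x ∈ intSubring)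
    (hx_not : x ∉ intSubring) : V x = sawtoothSum K x / K + 1 / 2 := by
  have hterm : ∀ i ∈ range K, sawtooth (2 ^ i * x) = Int.fract (2 ^ i * x) - 1 / 2 := by
    refine fun i hi => sawtooth_of_notMem fun hmem => hx_not ?_
    have hpow : (2 : ℚ) ^ K = 2 ^ (K - i) * 2 ^ i := by
      rw [← pow_add, Nat.sub_add_cancel (mem_range.1 hi).le]
    have : x = 2 ^ (K - i) * (2 ^ i * x) - (2 ^ K - 1) * x := by rw [hpow]; ring
    rw [this]
    exact sub_mem (mul_mem (pow_mem (ofNat_mem _ 2) _) hmem) hx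
  rw [hV.eq_sum_fract hK hx, sawtoothSum, sum_congr rfl hterm, sum_sub_distrib, sum_const,
    card_range, nsmul_eq_mul, sub_div, mul_div_cancel_left₀ _ (Nat.cast_ne_zero.2 hK.ne'),
    sub_add_cancel]

lemma eq_half (hV : IsV2 V) (hr : 0 < r) (hx : (2 ^ r + 1) * x ∈ intSubring)
    (hx_not : x ∉ intSubring) : V x = 1 / 2 := by
  rw [hV.eq_sawtoothSum_div_add_half (K := 2 * r) (by lia) (two_pow_sub_one_mul_mem dvd_rfl hx)
    hx_not, sawtoothSum_eq_zero dvd_rfl hx, zero_div, zero_add]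

/-- Over the denominator `2 ^ (2 * k) - 1` the left argument has numerator
`2 ^ k * (A + 1) + (A - 1)`, so its binary digits are those of `A + 1` followed by those of
`A - 1`. -/
lemma add_one_div_lt (hV : IsV2 V) {k A : ℕ} (hA : Odd A) (hAk : A < 2 ^ k - 1) :
    V (A / (2 ^ k - 1) + 1 / (2 ^ k + 1)) < V (A / (2 ^ k - 1)) := by
  have hk : 0 < k := Nat.pos_of_ne_zero (by rintro rfl; simp at hAk)
  have hpos : (0 : ℚ) < 2 ^ k - 1 := sub_pos.2 (one_lt_pow₀ one_lt_two hk.ne')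
  obtain ⟨c, rfl⟩ := hA
  set B := 2 ^ k * (2 * c + 1 + 1) + (2 * c + 1 - 1) with hB
  have hBk : B < 2 ^ (2 * k) - 1 := by
    have : (2 ^ k) * (2 * c + 1 + 1) ≤ 2 ^ k * (2 ^ k - 1) := by gcongr; lia
    rw [two_mul, pow_add]
    have : 2 ^ k * (2 ^ k - 1) + 2 ^ k = 2 ^ k * 2 ^ k := by
      rw [← Nat.mul_succ, Nat.succ_eq_add_one, Nat.sub_add_cancel Nat.one_le_two_pow]
    lia
  have hx : ((2 * c + 1 : ℕ) : ℚ) / (2 ^ k - 1) + 1 / (2 ^ k + 1) = B / (2 ^ (2 * k) - 1) := by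
    have : (2 : ℚ) ^ (2 * k) - 1 = (2 ^ k - 1) * (2 ^ k + 1) := by ring
    rw [this, hB, Nat.add_sub_cancel]
    push_cast
    field_simp
    ring
  rw [hV _ (2 * k) B (by lia) hBk ⟨0, by rw [hx, sub_self, Int.cast_zero]⟩,
    hV _ k _ hk hAk ⟨0, by simp⟩, sum_digits_base_pow_mul_add one_lt_two _ (by lia)]
  have hdigits := Nat.mul_lt_mul_of_pos_right
    (sum_digits_succ_add_sum_digits_pred_lt (odd_two_mul_add_one c)) hk
  rw [mul_comm 2 (Nat.digits _ _).sum, mul_assoc] at hdigits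
  rw [div_lt_div_iff₀ (by positivity) (by positivity)]
  exact_mod_cast hdigits

lemma add_one_div_lt_half (hV : IsV2 V) {g k : ℕ} (hg : 0 < g) (hk : 0 < k) (hgk : 2 * g ∣ k) :
    V (1 / (2 ^ g + 1) + 1 / (2 ^ k + 1)) < 1 / 2 := by
  have hpow : 1 < 2 ^ k := Nat.one_lt_two_pow hk.ne'
  have hmem : (2 ^ g + 1 : ℚ) * (1 / (2 ^ g + 1)) ∈ intSubring := by
    rw [mul_one_div_cancel (by positivity)]
    exact one_mem _
  have hnot : (1 / (2 ^ g + 1) : ℚ) ∉ intSubring := by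
    rw [notMem_intSubring_iff, Int.fract_eq_self.2 ⟨by positivity, ?_⟩]
    · positivity
    · exact (div_lt_one (by positivity)).2 (lt_add_of_pos_left _ (by positivity))
  obtain ⟨A, hA⟩ := two_pow_add_one_dvd_two_pow_sub_one hgk
  have hA' : (1 / (2 ^ g + 1) : ℚ) = A / (2 ^ k - 1) := by
    have hcast : (2 ^ k : ℚ) = (2 ^ g + 1) * A + 1 :=
      mod_cast (Nat.sub_eq_iff_eq_add hpow.le).1 hA
    have : (1 : ℚ) < 2 ^ k := mod_cast hpow
    rw [div_eq_div_iff (by positivity) (by linarith), hcast]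
    ring
  have hodd : Odd (2 ^ k - 1) := Nat.Even.sub_odd hpow.le (even_two.pow_of_ne_zero hk.ne') odd_one
  rw [hA] at hodd
  have hlt : A < 2 ^ k - 1 := by
    rw [hA]
    exact lt_mul_of_one_lt_left (Nat.odd_mul.1 hodd).2.pos (lt_add_of_pos_left _ (by positivity))
  rw [hA']
  refine (hV.add_one_div_lt (Nat.odd_mul.1 hodd).2 hlt).trans_eq ?_
  rw [← hA', hV.eq_half hg hmem hnot]

lemma exists_lt_half_of_odd_of_even (hV : IsV2 V) {g b c : ℕ} (hg : 0 < g) (hb : Odd b)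
    (hc : Even c) (hc0 : 0 < c) :
    ∃ i j : ℤ, ¬ (2 ^ (g * b) + 1 : ℤ) ∣ i ∧ ¬ (2 ^ (g * c) + 1 : ℤ) ∣ j ∧
      V (i / (2 ^ (g * b) + 1) + j / (2 ^ (g * c) + 1)) < 1 / 2 := by
  have one_lt (k : ℕ) : (1 : ℤ) < 2 ^ k + 1 := lt_add_of_pos_left _ (by positivity)
  obtain ⟨u, hu⟩ : (2 ^ g + 1 : ℤ) ∣ 2 ^ (g * b) + 1 := by
    simpa [pow_mul] using hb.add_dvd_pow_add_pow (2 ^ g : ℤ) 1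
  have hu0 : 0 < u := pos_of_mul_pos_right (hu ▸ (one_lt (g * b)).trans' one_pos) (by positivity)
  refine ⟨u, 1, fun h => ?_, fun h => ?_, ?_⟩
  · rw [hu] at h
    exact (lt_mul_of_one_lt_left hu0 (one_lt g)).not_ge (Int.le_of_dvd hu0 h)
  · exact (one_lt (g * c)).not_ge (Int.le_of_dvd one_pos h)
  · have hfrac : (u / (2 ^ (g * b) + 1) : ℚ) = 1 / (2 ^ g + 1) := by
      rw [div_eq_div_iff (by positivity) (by positivity), one_mul, mul_comm]
      exact_mod_cast hu.symm
    rw [hfrac, Int.cast_one]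
    exact hV.add_one_div_lt_half hg (by positivity)
      (mul_comm g c ▸ mul_dvd_mul_right hc.two_dvd g)

/-- Write `b = g * b'` and `c = g * c'` with `g = gcd b c`. If `b'` and `c'` were both odd, then
`2 ^ g + 1` would be a common divisor; so exactly one of them is even. -/
lemma exists_lt_half (hV : IsV2 V) {b c : ℕ} (hb : 0 < b) (hc : 0 < c)
    (hbc : (2 ^ b + 1).Coprime (2 ^ c + 1)) :
    ∃ i j : ℤ, ¬ (2 ^ b + 1 : ℤ) ∣ i ∧ ¬ (2 ^ c + 1 : ℤ) ∣ j ∧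
      V (i / (2 ^ b + 1) + j / (2 ^ c + 1)) < 1 / 2 := by
  obtain ⟨b', c', hcop, hb', hc'⟩ := Nat.exists_coprime b c
  have hg : 0 < b.gcd c := Nat.gcd_pos_of_pos_left c hb
  generalize b.gcd c = g at hb' hc' hg
  rw [mul_comm] at hb' hc'
  subst hb' hc'
  have hb0 : 0 < b' := Nat.pos_of_mul_pos_left hb
  have hc0 : 0 < c' := Nat.pos_of_mul_pos_left hc
  rcases b'.even_or_odd with hb_even | hb_odd <;> rcases c'.even_or_odd with hc_even | hc_odd
  · exact absurd hcop (Nat.not_coprime_of_dvd_of_dvd one_lt_two hb_even.two_dvd hc_even.two_dvd)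
  · obtain ⟨j, i, hj, hi, hlt⟩ := hV.exists_lt_half_of_odd_of_even hg hc_odd hb_even hb0
    exact ⟨i, j, hi, hj, add_comm (i / _ : ℚ) _ ▸ hlt⟩
  · exact hV.exists_lt_half_of_odd_of_even hg hb_odd hc_even hc0
  · have hdvd {k : ℕ} (hk : Odd k) : 2 ^ g + 1 ∣ 2 ^ (g * k) + 1 := by
      simpa [pow_mul] using hk.nat_add_dvd_pow_add_pow (2 ^ g) 1
    exact absurd hbc (Nat.not_coprime_of_dvd_of_dvd (lt_add_of_pos_left _ (by positivity))
      (hdvd hb_odd) (hdvd hc_odd))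

end IsV2

section AltSum

variable {E ι : Type*} [AddCommGroup E] {f : ℚ → E} {n : ι → ℕ} {J : Finset ι}

/-- The alternating sum `∑_{S ⊆ J} (-1)^|S| f ((∏_{j ∈ S} n j) x)`: the result of applying to `f`
the commuting operators `f ↦ (x ↦ f x - f (n j * x))`, one for each `j ∈ J`. -/
def altSum (f : ℚ → E) (n : ι → ℕ) (J : Finset ι) (x : ℚ) : E :=
  ∑ S ∈ J.powerset, (-1 : ℤ) ^ #S • f ((∏ j ∈ S, n j : ℕ) * x)

lemma altSum_insert [DecidableEq ι] {j : ι} (hj : j ∉ J) (x : ℚ) :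
    altSum f n (insert j J) x = altSum f n J x - altSum f n J (n j * x) := by
  rw [altSum, sum_powerset_insert hj, sub_eq_add_neg, altSum, altSum, ← sum_neg_distrib]
  congr 1
  refine sum_congr rfl fun S hS => ?_
  have hjS : j ∉ S := fun h => hj (mem_powerset.1 hS h)
  rw [card_insert_of_notMem hjS, prod_insert hjS, pow_succ, mul_neg_one, neg_smul]
  push_cast
  ring_nf

lemma IsDistribution.altSum {m : ℕ} (hf : IsDistribution m f) (hJ : ∀ j ∈ J, (n j).Coprime m) :
    IsDistribution m (altSum f n J) :=
  IsDistribution.sum fun _ hS => IsDistribution.zsmul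
    (hf.comp_mul (Nat.Coprime.prod_left fun j hj => hJ j (mem_powerset.1 hS hj))) _

end AltSum

section GenericSums

variable {ι : Type*} {n : ι → ℕ} {J S : Finset ι} {x : ℚ}

/-- The rational numbers `∑_{k ∈ J} i k / n k` in which no summand is an integer. -/
def genericSums (n : ι → ℕ) (J : Finset ι) : Set ℚ :=
  {x | ∃ i : ι → ℤ, (∀ k ∈ J, ¬ (n k : ℤ) ∣ i k) ∧ x = ∑ k ∈ J, (i k : ℚ) / n k}

lemma natCast_mul_mem_genericSums (hx : x ∈ genericSums n J) {m : ℕ}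
    (hm : ∀ k ∈ J, (n k).Coprime m) : (m * x : ℚ) ∈ genericSums n J := by
  obtain ⟨i, hi, rfl⟩ := hx
  refine ⟨fun k => m * i k, fun k hk h => hi k hk ?_, ?_⟩
  · exact (Nat.isCoprime_iff_coprime.2 (hm k hk)).dvd_of_dvd_mul_left h
  · rw [mul_sum]
    exact sum_congr rfl fun k _ => by push_cast; ring

lemma add_div_mem_genericSums [DecidableEq ι] {j : ι} (hj : j ∉ J) (hx : x ∈ genericSums n J)
    {l : ℤ} (hl : ¬ (n j : ℤ) ∣ l) : (x + l / n j : ℚ) ∈ genericSums n (insert j J) := by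
  obtain ⟨i, hi, rfl⟩ := hx
  have hi' : ∀ k ∈ J, update i j l k = i k := fun k hk =>
    update_of_ne (ne_of_mem_of_not_mem hk hj) _ _
  refine ⟨update i j l, (forall_mem_insert _ _ _).2 ⟨by simpa, fun k hk => ?_⟩, ?_⟩
  · rw [hi' k hk]
    exact hi k hk
  · rw [sum_insert hj, update_self, add_comm]
    congr 1
    exact sum_congr rfl fun k hk => by rw [hi' k hk]

lemma prod_mul_mem_intSubring (hn : ∀ k ∈ J, n k ≠ 0) (hx : x ∈ genericSums n J) :
    (∏ k ∈ J, n k : ℕ) * x ∈ intSubring := by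
  obtain ⟨i, -, rfl⟩ := hx
  rw [mul_sum]
  refine sum_mem fun k hk => ?_
  obtain ⟨c, hc⟩ := dvd_prod_of_mem n hk
  have hk0 : (n k : ℚ) ≠ 0 := mod_cast hn k hk
  refine ⟨c * i k, ?_⟩
  rw [hc]
  push_cast
  field_simp
  simp

lemma prod_mul_notMem_intSubring (hn : ∀ k ∈ J, n k ≠ 0)
    (hcop : (J : Set ι).Pairwise (Nat.Coprime on n)) (hx : x ∈ genericSums n J) (hS : S ⊂ J) :
    (∏ k ∈ S, n k : ℕ) * x ∉ intSubring := by
  classical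
  obtain ⟨i, hi, rfl⟩ := hx
  obtain ⟨j, hj, hjS⟩ := exists_of_ssubset hS
  intro hmem
  set P := ∏ k ∈ J.erase j, n k
  have hP : (P * ∑ k ∈ J, (i k : ℚ) / n k) ∈ intSubring := by
    obtain ⟨c, hc⟩ : ∏ k ∈ S, n k ∣ P :=
      prod_dvd_prod_of_subset _ _ n (subset_erase.2 ⟨hS.subset, hjS⟩)
    rw [hc, mul_comm (∏ k ∈ S, n k), Nat.cast_mul, mul_assoc]
    exact mul_mem (natCast_mem _ c) hmem
  have hrest : (P * ∑ k ∈ J.erase j, (i k : ℚ) / n k) ∈ intSubring :=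
    prod_mul_mem_intSubring (fun k hk => hn k (mem_of_mem_erase hk))
      ⟨i, fun k hk => hi k (mem_of_mem_erase hk), rfl⟩
  rw [← add_sum_erase J _ hj, mul_add] at hP
  obtain ⟨z, hz : (z : ℚ) = P * (i j / n j)⟩ := (add_mem_cancel_right hrest).1 hP
  have hdvd : (n j : ℤ) ∣ P * i j := by
    have hj0 : (n j : ℚ) ≠ 0 := mod_cast hn j hj
    refine ⟨z, ?_⟩
    field_simp at hz
    exact_mod_cast hz.symm.trans (mul_comm _ _)
  have hjP : (n j).Coprime P := Nat.Coprime.prod_right fun k hk =>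
    hcop hj (mem_of_mem_erase hk) (ne_of_mem_erase hk).symm
  exact hi j hj ((Nat.isCoprime_iff_coprime.2 hjP).dvd_of_dvd_mul_left hdvd)

lemma exists_pow_mul_sub_mem {m : ℕ} (hm : 1 < m) (hJ : ∀ k ∈ J, (n k).Coprime m)
    (hx : x ∈ genericSums n J) : ∃ r ≠ 0, (m ^ r : ℕ) * x - x ∈ intSubring := by
  have hn : ∀ k ∈ J, n k ≠ 0 := fun k hk h =>
    hm.ne' ((Nat.coprime_zero_left m).1 (h ▸ hJ k hk))
  have hpos : 0 < ∏ k ∈ J, n k := prod_pos fun k hk => Nat.pos_of_ne_zero (hn k hk)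
  refine ⟨(∏ k ∈ J, n k).totient, (Nat.totient_pos.2 hpos).ne', ?_⟩
  obtain ⟨c, hc⟩ := Nat.modEq_iff_dvd.1
    (Nat.ModEq.pow_totient (Nat.Coprime.prod_right fun k hk => (hJ k hk).symm)).symm
  have hc' : ((m ^ (∏ k ∈ J, n k).totient : ℕ) : ℚ) - 1 = (∏ k ∈ J, n k : ℕ) * c := mod_cast hc
  rw [← sub_one_mul, hc', mul_right_comm]
  exact mul_mem (prod_mul_mem_intSubring hn hx) (intCast_mem _ c)

end GenericSums

section Descent

variable {E ι : Type*} [AddCommGroup E] [DecidableEq ι] {f : ℚ → E} {n : ι → ℕ} {J : Finset ι}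
  {x : ℚ} {j : ι}

/-- Sum the vanishing values over all nontrivial shifts of the `j`-th coordinate and use the
distribution relation. -/
lemma altSum_eq_smul_of_insert (hj : j ∉ J) (hnj : n j ≠ 0) (hf : IsDistribution (n j) f)
    (hJ : ∀ k ∈ J, (n k).Coprime (n j))
    (hzero : ∀ y ∈ genericSums n (insert j J), altSum f n (insert j J) y = 0)
    (hx : x ∈ genericSums n J) :
    altSum f n J x = (2 - n j : ℤ) • altSum f n J (n j * x) := by
  have hF := hf.altSum hJ
  obtain ⟨k, hk⟩ := Nat.exists_eq_succ_of_ne_zero hnj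
  have hshift : ∀ l ∈ range k, altSum f n J (x + (l + 1 : ℕ) / n j) = altSum f n J (n j * x) := by
    intro l hl
    have hndvd : ¬ (n j : ℤ) ∣ (l + 1 : ℕ) := by
      rw [Int.natCast_dvd_natCast]
      exact Nat.not_dvd_of_pos_of_lt l.succ_pos (by grind)
    have hvanish := hzero _ (add_div_mem_genericSums hj hx hndvd)
    have hmul : (n j : ℚ) * (x + (l + 1 : ℕ) / n j) = n j * x + (l + 1 : ℕ) := by field_simp
    rw [altSum_insert hj, sub_eq_zero, Int.cast_natCast, hmul] at hvanish
    rw [hvanish, periodic_add_of_mem hF.periodic _ (natCast_mem _ _)]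
  have hsum := hF.sum_add_div x
  rw [hk, sum_range_succ', ← hk, sum_congr rfl hshift, sum_const, card_range] at hsum
  rw [Nat.cast_zero, zero_div, add_zero, ← eq_sub_iff_add_eq'] at hsum
  rw [hsum, hk, ← natCast_zsmul]
  push_cast
  module

/-- Multiplication by `n j` permutes a finite set of classes modulo `1`, while each application
scales `altSum f n J` by a factor of absolute value greater than `1`. -/
lemma altSum_eq_zero_of_insert [IsAddTorsionFree E] (hj : j ∉ J) (hnj : 3 < n j)
    (hf : IsDistribution (n j) f) (hJ : ∀ k ∈ J, (n k).Coprime (n j))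
    (hzero : ∀ y ∈ genericSums n (insert j J), altSum f n (insert j J) y = 0)
    (hx : x ∈ genericSums n J) : altSum f n J x = 0 := by
  have hiter (r : ℕ) :
      altSum f n J x = (2 - n j : ℤ) ^ r • altSum f n J ((n j ^ r : ℕ) * x) := by
    induction r with
    | zero => simp
    | succ r ih =>
      have hmem := natCast_mul_mem_genericSums hx fun k hk => (hJ k hk).pow_right r
      rw [ih, altSum_eq_smul_of_insert hj (by lia) hf hJ hzero hmem, smul_smul, pow_succ, pow_succ']
      push_cast
      rw [mul_assoc]
  obtain ⟨r, hr, hmem⟩ := exists_pow_mul_sub_mem (by lia) hJ hx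
  have hfix : ((2 - n j : ℤ) ^ r - 1) • altSum f n J x = 0 := by
    have hperiod := periodic_add_of_mem (hf.altSum hJ).periodic x hmem
    rw [add_sub_cancel] at hperiod
    rw [sub_smul, one_smul, ← hperiod, ← hiter, hperiod, sub_self]
  refine (smul_eq_zero.1 hfix).resolve_left fun h => ?_
  have habs := one_lt_pow₀ (show 1 < |(2 - n j : ℤ)| by rw [lt_abs]; lia) hr
  rw [← abs_pow, sub_eq_zero.1 h] at habs
  simp at habs

lemma altSum_eq_zero_of_union [IsAddTorsionFree E] {T : Finset ι} (hT : Disjoint J T)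
    (hcop : Pairwise (Nat.Coprime on n)) (hn : ∀ j ∈ T, 3 < n j)
    (hf : ∀ j ∈ T, IsDistribution (n j) f)
    (hzero : ∀ x ∈ genericSums n (J ∪ T), altSum f n (J ∪ T) x = 0) :
    ∀ x ∈ genericSums n J, altSum f n J x = 0 := by
  induction T using Finset.induction_on with
  | empty => simpa using hzero
  | insert j T hjT ih =>
    rw [forall_mem_insert] at hn hf
    rw [disjoint_insert_right] at hT
    rw [union_insert] at hzero
    have hj : j ∉ J ∪ T := notMem_union.2 ⟨hT.1, hjT⟩
    exact ih hT.2 hn.2 hf.2 fun x => altSum_eq_zero_of_insert hj hn.1 hf.1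
      (fun k hk => hcop (ne_of_mem_of_not_mem hk hj)) hzero

end Descent

lemma vmulti_eq_altSum (V : ℚ → ℚ) {t : ℕ} (a : Fin t → ℕ) (x : ℚ) :
    Vmulti V a x = (-1) ^ t * altSum V (fun k => 2 ^ a k + 1) univ x := by
  rw [Vmulti, altSum, powerset_univ, mul_sum]
  refine sum_congr rfl fun S _ => ?_
  have hsign : (-1 : ℚ) ^ (t - #S) = (-1) ^ t * (-1) ^ #S := by
    have hS : #S ≤ t := by simpa using card_le_univ S
    rw [← pow_sub_mul_pow (-1 : ℚ) hS, mul_assoc, ← mul_pow, neg_one_mul, neg_neg, one_pow, mul_one]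
  rw [hsign, zsmul_eq_mul, mul_assoc]
  push_cast
  rfl

section Fermat

variable {ι : Type*} {a : ι → ℕ} {J : Finset ι} {V : ℚ → ℚ} {K : ℕ} {x : ℚ} {p q : ι}

lemma two_pow_sub_one_mul_mem_of_mem_genericSums (haK : ∀ k ∈ J, 2 * a k ∣ K)
    (hx : x ∈ genericSums (fun k => 2 ^ a k + 1) J) : (2 ^ K - 1) * x ∈ intSubring := by
  obtain ⟨i, -, rfl⟩ := hx
  rw [mul_sum]
  refine sum_mem fun k hk => two_pow_sub_one_mul_mem (haK k hk) ⟨i k, ?_⟩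
  push_cast
  field_simp
  simp

lemma IsV2.altSum_eq (hV : IsV2 V) (hJ : J.Nonempty) (hK : 0 < K) (haK : ∀ k ∈ J, 2 * a k ∣ K)
    (hcop : (J : Set ι).Pairwise (Nat.Coprime on fun k => 2 ^ a k + 1))
    (hx : x ∈ genericSums (fun k => 2 ^ a k + 1) J) :
    altSum V (fun k => 2 ^ a k + 1) J x =
      altSum (sawtoothSum K) (fun k => 2 ^ a k + 1) J x / K - (-1) ^ #J / 2 := by
  classical
  have hmem := two_pow_sub_one_mul_mem_of_mem_genericSums haK hx
  have hn : ∀ k ∈ J, 2 ^ a k + 1 ≠ 0 := fun k _ => Nat.succ_ne_zero _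
  have hterm : ∀ S ∈ J.powerset, V ((∏ k ∈ S, (2 ^ a k + 1) : ℕ) * x) =
      sawtoothSum K ((∏ k ∈ S, (2 ^ a k + 1) : ℕ) * x) / K + 1 / 2
        - if S = J then 1 / 2 else 0 := by
    intro S hS
    obtain rfl | hSJ := (mem_powerset.1 hS).eq_or_ssubset
    · have hint := prod_mul_mem_intSubring hn hx
      rw [hV.eq_zero_of_mem hint, sawtoothSum_of_mem K hint, if_pos rfl, zero_div, zero_add,
        sub_self]
    · have hnot := prod_mul_notMem_intSubring hn hcop hx hSJ
      rw [hV.eq_sawtoothSum_div_add_half hK _ hnot, if_neg hSJ.ne, sub_zero]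
      rw [mul_left_comm]
      exact mul_mem (natCast_mem _ _) hmem
  have hsigns : ∑ S ∈ J.powerset, (-1 : ℚ) ^ #S / 2 = 0 := by
    have hsum := sum_powerset_neg_one_pow_card_of_nonempty hJ
    rw [← sum_div, div_eq_zero_iff]
    exact Or.inl (mod_cast hsum)
  rw [altSum, sum_congr rfl fun S hS => by rw [hterm S hS], altSum, sum_div]
  simp only [zsmul_eq_mul, mul_sub, mul_add, sum_sub_distrib, sum_add_distrib, mul_ite, mul_zero,
    sum_ite_eq', mem_powerset_self, if_true, Int.cast_pow, Int.cast_neg, Int.cast_one, mul_one_div,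
    hsigns, add_zero, mul_div_assoc]

lemma IsV2.vmulti_eq (hV : IsV2 V) {t : ℕ} {a : Fin t → ℕ} (ht : t ≠ 0) (hK : 0 < K)
    (haK : ∀ k, 2 * a k ∣ K) (hcop : Pairwise (Nat.Coprime on fun k => 2 ^ a k + 1))
    (hx : x ∈ genericSums (fun k => 2 ^ a k + 1) univ) :
    Vmulti V a x =
      -(1 / 2) + (-1) ^ t * (altSum (sawtoothSum K) (fun k => 2 ^ a k + 1) univ x / K) := by
  have : NeZero t := ⟨ht⟩
  have hsq : ((-1) ^ t * (-1) ^ t : ℚ) = 1 := by rw [← mul_pow, neg_mul_neg, one_mul, one_pow]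
  rw [vmulti_eq_altSum, hV.altSum_eq univ_nonempty hK (fun k _ => haK k) (hcop.set_pairwise _) hx,
    card_univ, Fintype.card_fin]
  linear_combination -hsq / 2

lemma altSum_sawtoothSum_pair [DecidableEq ι] (hpq : p ≠ q) (hp : 2 * a p ∣ K) (hq : 2 * a q ∣ K)
    (hx : x ∈ genericSums (fun k => 2 ^ a k + 1) {p, q}) :
    altSum (sawtoothSum K) (fun k => 2 ^ a k + 1) {p, q} x = sawtoothSum K x := by
  have hmem := prod_mul_mem_intSubring (fun k _ => Nat.succ_ne_zero _) hx
  rw [prod_pair hpq] at hmem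
  push_cast at hmem
  have hmem_p : (2 ^ a p + 1) * ((2 ^ a q + 1) * x) ∈ intSubring := by rwa [← mul_assoc]
  have hmem_q : (2 ^ a q + 1) * ((2 ^ a p + 1) * x) ∈ intSubring := by rwa [mul_left_comm]
  have hempty (y : ℚ) : altSum (sawtoothSum K) (fun k => 2 ^ a k + 1) ∅ y = sawtoothSum K y := by
    simp [altSum]
  have hsingle (y : ℚ) : altSum (sawtoothSum K) (fun k => 2 ^ a k + 1) {q} y =
      sawtoothSum K y - sawtoothSum K ((2 ^ a q + 1) * y) := by
    rw [← insert_empty_eq q, altSum_insert (notMem_empty q), hempty, hempty]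
    push_cast
    rfl
  rw [altSum_insert (by simpa), hsingle, hsingle]
  push_cast
  rw [sawtoothSum_eq_zero hp hmem_p, sawtoothSum_eq_zero hq hmem_q, sawtoothSum_of_mem K hmem_q,
    sub_zero, sub_self, sub_zero]

lemma IsV2.exists_altSum_pair_ne_zero [DecidableEq ι] (hV : IsV2 V) (hpq : p ≠ q) (hK : 0 < K)
    (hp : 2 * a p ∣ K) (hq : 2 * a q ∣ K) (hcop : (2 ^ a p + 1).Coprime (2 ^ a q + 1)) :
    ∃ x ∈ genericSums (fun k => 2 ^ a k + 1) {p, q},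
      altSum (sawtoothSum K) (fun k => 2 ^ a k + 1) {p, q} x ≠ 0 := by
  have hpos {k : ι} (hk : 2 * a k ∣ K) : 0 < a k :=
    Nat.pos_of_mul_pos_left (Nat.pos_of_dvd_of_pos hk hK)
  obtain ⟨i, j, hi, hj, hlt⟩ := hV.exists_lt_half (hpos hp) (hpos hq) hcop
  have hgen : (i / (2 ^ a p + 1) + j / (2 ^ a q + 1) : ℚ) ∈
      genericSums (fun k => 2 ^ a k + 1) {p, q} := by
    have hgen := add_div_mem_genericSums (n := fun k => 2 ^ a k + 1) (x := 0) (notMem_empty q)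
      ⟨0, by simp, by simp⟩ (mod_cast hj)
    have hgen := add_div_mem_genericSums (j := p) (by simpa) hgen (mod_cast hi)
    simpa [add_comm] using hgen
  refine ⟨_, hgen, fun h => hlt.ne ?_⟩
  have hpair : (({p, q} : Finset ι) : Set ι).Pairwise (Nat.Coprime on fun k => 2 ^ a k + 1) := by
    rw [coe_pair, Set.pairwise_pair_of_symm]
    exact fun _ => hcop
  have hnot := prod_mul_notMem_intSubring (fun k _ => Nat.succ_ne_zero _) hpair hgen
    (empty_ssubset.2 (insert_nonempty p {q}))
  rw [prod_empty, Nat.cast_one, one_mul] at hnot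
  rw [altSum_sawtoothSum_pair hpq hp hq hgen] at h
  rw [hV.eq_sawtoothSum_div_add_half hK
    (two_pow_sub_one_mul_mem_of_mem_genericSums (by simp [hp, hq]) hgen) hnot,
    h, zero_div, zero_add]

lemma three_lt_two_pow_add_one {b c : ℕ} (hb : 0 < b) (hbc : b ≤ c)
    (hcop : (2 ^ b + 1).Coprime (2 ^ c + 1)) : 3 < 2 ^ c + 1 := by
  have hne : b ≠ c := by
    rintro rfl
    simp at hcop
  have : 2 ^ 2 ≤ 2 ^ c := Nat.pow_le_pow_right two_pos (by lia)
  lia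

lemma IsV2.exists_altSum_ne_zero [Fintype ι] [Nontrivial ι] (hV : IsV2 V) (hK : 0 < K)
    (hpos : ∀ k, 0 < a k) (haK : ∀ k, 2 * a k ∣ K)
    (hcop : Pairwise (Nat.Coprime on fun k => 2 ^ a k + 1)) :
    ∃ x ∈ genericSums (fun k => 2 ^ a k + 1) univ,
      altSum (sawtoothSum K) (fun k => 2 ^ a k + 1) univ x ≠ 0 := by
  classical
  obtain ⟨p, hp⟩ := Finite.exists_min a
  obtain ⟨q, hqp⟩ := exists_ne p
  have hlarge : ∀ k ∈ ({p, q} : Finset ι)ᶜ, 3 < 2 ^ a k + 1 := fun k hk =>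
    three_lt_two_pow_add_one (hpos p) (hp k) (hcop (by rintro rfl; simp at hk))
  by_contra! hzero
  obtain ⟨x, hx, hne⟩ :=
    hV.exists_altSum_pair_ne_zero hqp.symm hK (haK p) (haK q) (hcop hqp.symm)
  rw [← union_compl {p, q}] at hzero
  exact hne (altSum_eq_zero_of_union disjoint_compl_right hcop hlarge
    (fun j _ => isDistribution_sawtoothSum K (even_two.pow_of_ne_zero (hpos j).ne').add_one)
    hzero x hx)

end Fermat

theorem stmt_6_general (V : ℚ → ℚ) (hV : IsV2 V) (t : ℕ) (ht : 2 ≤ t)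
    (a : Fin t → ℕ) (hpos : ∀ j, 0 < a j)
    (hcop : ∀ j k, j ≠ k → Nat.Coprime (2 ^ a j + 1) (2 ^ a k + 1)) :
    ∃ i : Fin t → ℤ, (∀ j, ¬ ((2 ^ a j + 1 : ℤ) ∣ i j)) ∧
        Vmulti V a (∑ j, (i j : ℚ) / ((2 : ℚ) ^ a j + 1)) ≠ -(1 / 2) := by
  have : Nontrivial (Fin t) := Fin.nontrivial_iff_two_le.2 ht
  obtain ⟨K, hK, haK⟩ : ∃ K > 0, ∀ k, 2 * a k ∣ K :=
    ⟨∏ k, 2 * a k, prod_pos fun k _ => mul_pos two_pos (hpos k), fun k =>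
      dvd_prod_of_mem (fun k => 2 * a k) (mem_univ k)⟩
  obtain ⟨x, ⟨i, hi, rfl⟩, hne⟩ := hV.exists_altSum_ne_zero hK hpos haK @hcop
  refine ⟨i, fun j => mod_cast hi j (mem_univ j), fun h => hne ?_⟩
  have hvalue := hV.vmulti_eq (by lia) hK haK @hcop ⟨i, hi, rfl⟩
  push_cast at hvalue hne ⊢
  rw [h] at hvalue
  simpa [hK.ne'] using hvalue

/-- For `t ≥ 2` and positive integers `a₁, …, a_t` with `2^{a_j}+1` pairwise coprime,
either (i) there are integers `i_j`, none divisible by `2^{a_j}+1`, with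
`V(2; a; ∑ i_j/(2^{a_j}+1)) ≠ -1/2`, or (ii) there are integers `i_j` with `2^{a_{j₀}}+1 ∣ i_{j₀}`
for some `j₀` and `V(2; a; ∑ i_j/(2^{a_j}+1)) ∉ [-1/2, 1/2]`. -/
theorem stmt_6 (V : ℚ → ℚ) (hV : IsV2 V) (t : ℕ) (ht : 2 ≤ t)
    (a : Fin t → ℕ) (hpos : ∀ j, 0 < a j)
    (hcop : ∀ j k, j ≠ k → Nat.Coprime (2 ^ a j + 1) (2 ^ a k + 1)) :
    (∃ i : Fin t → ℤ, (∀ j, ¬ ((2 ^ a j + 1 : ℤ) ∣ i j)) ∧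
        Vmulti V a (∑ j, (i j : ℚ) / ((2 : ℚ) ^ a j + 1)) ≠ -(1 / 2)) ∨
      (∃ j₀ : Fin t, ∃ i : Fin t → ℤ, ((2 ^ a j₀ + 1 : ℤ) ∣ i j₀) ∧
        Vmulti V a (∑ j, (i j : ℚ) / ((2 : ℚ) ^ a j + 1)) ∉
          Set.Icc (-(1 / 2) : ℚ) (1 / 2)) := by
  exact Or.inl (stmt_6_general V hV t ht a hpos hcop)
end
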